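/- arXiv:math/0307335 — 2 statements merged into one kernel-verified Lean document; each statement's English description precedes it below -/
import Mathlib

section
/- Let Ω be an open set in ℝ⁴ with an almost complex structure J and let p ∈ Ω. For every λ₀ > 0 there exist an open neighborhood U₀ ⊆ Ω of p and a C^∞ diffeomorphism z from U₀ onto the unit ball 𝔹₂ ⊂ ℂ² such that z(p) = 0, Dz(p) ∘ J(p) ∘ (Dz(p))⁻¹ = J_st, and the pushforward structure Ĵ := z_*(J), defined by Ĵ(w) = Dz(z⁻¹(w)) ∘ J(z⁻¹(w)) ∘ (Dz(z⁻¹(w)))⁻¹ for w ∈ 𝔹₂, extends C² to the closed ball and satisfies ‖Ĵ − J_st‖_{C²(𝔹̄₂)} ≤ λ₀. -/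
/-!
Since `J(p)² = -1`, some real-linear isomorphism `A` conjugates `J(p)` to multiplication by `i`. In
the affine coordinates `z(x) = t⁻¹ A(x - p)` the structure `J` becomes
`Ĵ(y) = A ∘ J(p + t A⁻¹ y) ∘ A⁻¹`, so `Ĵ(0) = J_st` for every `t`. Each derivative of `Ĵ` in `y`
brings out a factor `t`; hence, as `t → 0`, `Ĵ` tends to `J_st` in `C²` on the closed unit ball.
-/

open Metric Set Filter Topology Asymptotics

noncomputable section

/-- The standard complex structure `J_st` (multiplication by `i`) on a complex
normed space, viewed as a real-linear endomorphism. -/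
def Jst (E : Type*) [NormedAddCommGroup E] [NormedSpace ℂ E] : E →L[ℝ] E :=
  ContinuousLinearMap.restrictScalars ℝ (Complex.I • ContinuousLinearMap.id ℂ E)

variable {E F : Type*} [NormedAddCommGroup E] [NormedSpace ℂ E]
  [NormedAddCommGroup F] [NormedSpace ℂ F]

/-- `J` is an almost complex structure on the set `Ω`: a smooth field of real-linear
endomorphisms with `J x ∘ J x = -id`. -/
structure IsACS (Ω : Set E) (J : E → E →L[ℝ] E) : Prop where
  smooth : ContDiffOn ℝ (⊤ : ℕ∞) J Ω
  sq : ∀ x ∈ Ω, (J x).comp (J x) = -(ContinuousLinearMap.id ℝ E)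

/-- `f` is `(J', J)`-holomorphic on `s`: `Df(x) ∘ J'(x) = J(f x) ∘ Df(x)`. -/
def IsHolomorphicMapOn (J' : E → E →L[ℝ] E) (J : F → F →L[ℝ] F) (f : E → F)
    (s : Set E) : Prop :=
  ∀ x ∈ s, DifferentiableAt ℝ f x ∧
    (fderiv ℝ f x).comp (J' x) = (J (f x)).comp (fderiv ℝ f x)

/-- The Levi form `L^J(r)(x)(X) = -d(J⋆dr)(x)(X, J x X)` where `J⋆dr` is the 1-form
`X ↦ dr(x)(J x X)` and `dω(x)(X,Y) = (Dω(x)X)(Y) - (Dω(x)Y)(X)`. -/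
def leviForm (J : E → E →L[ℝ] E) (r : E → ℝ) (x : E) (X : E) : ℝ :=
  -((fderiv ℝ (fun y => (fderiv ℝ r y).comp (J y)) x X) (J x X)
    - (fderiv ℝ (fun y => (fderiv ℝ r y).comp (J y)) x (J x X)) X)

/-- `r` is strictly `J`-plurisubharmonic on `s`. -/
def StrictPSHOn (J : E → E →L[ℝ] E) (r : E → ℝ) (s : Set E) : Prop :=
  ∀ x ∈ s, ∀ X : E, X ≠ 0 → 0 < leviForm J r x X

/-- `r` is `J`-plurisubharmonic on `s` (nonnegative Levi form). -/
def PSHOn (J : E → E →L[ℝ] E) (r : E → ℝ) (s : Set E) : Prop :=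
  ∀ x ∈ s, ∀ X : E, 0 ≤ leviForm J r x X

/-- `C⁰` norm of `g` on `K`. -/
def c0Norm {G : Type*} [NormedAddCommGroup G] (g : E → G) (K : Set E) : ℝ :=
  ⨆ x : K, ‖g (x : E)‖

/-- `C¹` norm of `g` on `K`. -/
def c1Norm {G : Type*} [NormedAddCommGroup G] [NormedSpace ℝ G] (g : E → G) (K : Set E) : ℝ :=
  ⨆ x : K, max ‖g (x : E)‖ ‖fderiv ℝ g (x : E)‖

/-- `C¹` distance between `g` and `h` on `K`. -/
def c1Dist {G : Type*} [NormedAddCommGroup G] [NormedSpace ℝ G] (g h : E → G) (K : Set E) : ℝ :=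
  ⨆ x : K, max ‖g (x : E) - h (x : E)‖ ‖fderiv ℝ g (x : E) - fderiv ℝ h (x : E)‖

/-- `C²` distance between `g` and `h` on `K`. -/
def c2Dist {G : Type*} [NormedAddCommGroup G] [NormedSpace ℝ G] (g h : E → G) (K : Set E) : ℝ :=
  ⨆ x : K, max ‖g (x : E) - h (x : E)‖
    (max ‖fderiv ℝ g (x : E) - fderiv ℝ h (x : E)‖
      ‖fderiv ℝ (fderiv ℝ g) (x : E) - fderiv ℝ (fderiv ℝ h) (x : E)‖)

/-- A `J`-holomorphic disc in `D`: a map from the unit disc `Δ ⊂ ℂ` to `D` satisfying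
`Df(ζ) ∘ J_st = J(f ζ) ∘ Df(ζ)`. -/
def IsJDisc (J : F → F →L[ℝ] F) (D : Set F) (f : ℂ → F) : Prop :=
  MapsTo f (ball (0 : ℂ) 1) D ∧
  ∀ ζ ∈ ball (0 : ℂ) 1, DifferentiableAt ℝ f ζ ∧
    (fderiv ℝ f ζ).comp (Jst ℂ) = (J (f ζ)).comp (fderiv ℝ f ζ)

/-- The Kobayashi–Royden infinitesimal pseudometric of `(D, J)`. -/
def kobayashiMetric (J : F → F →L[ℝ] F) (D : Set F) (p : F) (v : F) : ℝ :=
  sInf {α : ℝ | 0 < α ∧ ∃ f : ℂ → F, IsJDisc J D f ∧ f 0 = p ∧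
    fderiv ℝ f 0 1 = α⁻¹ • v}

/-- The integrated Kobayashi pseudodistance of `(D, J)`. -/
def kobayashiDist (J : F → F →L[ℝ] F) (D : Set F) (p q : F) : ℝ :=
  sInf {d : ℝ | ∃ γ : ℝ → F, ContDiffOn ℝ 1 γ (Icc 0 1) ∧ MapsTo γ (Icc 0 1) D ∧
    γ 0 = p ∧ γ 1 = q ∧ d = ∫ t in (0:ℝ)..1, kobayashiMetric J D (γ t) (deriv γ t)}

/-- `f` is a smooth diffeomorphism from `s` onto `t` with inverse `g`. -/
def IsDiffeoOn (f : E → F) (g : F → E) (s : Set E) (t : Set F) : Prop :=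
  ContDiffOn ℝ (⊤ : ℕ∞) f s ∧ ContDiffOn ℝ (⊤ : ℕ∞) g t ∧ MapsTo f s t ∧ MapsTo g t s ∧
  (∀ x ∈ s, g (f x) = x) ∧ (∀ y ∈ t, f (g y) = y)

/-- The Laplacian of a real function on `ℂ ≅ ℝ²`. -/
def lapR (g : ℂ → ℝ) (ζ : ℂ) : ℝ :=
  fderiv ℝ (fun w => fderiv ℝ g w 1) ζ 1
    + fderiv ℝ (fun w => fderiv ℝ g w Complex.I) ζ Complex.I

/-- The Wirtinger derivative `∂g/∂ζ`. -/
def wirtingerD (g : ℂ → ℂ) (ζ : ℂ) : ℂ :=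
  (fderiv ℝ g ζ 1 - Complex.I * fderiv ℝ g ζ Complex.I) / 2

/-- The Wirtinger derivative `∂g/∂ζ̄`. -/
def wirtingerDbar (g : ℂ → ℂ) (ζ : ℂ) : ℂ :=
  (fderiv ℝ g ζ 1 + Complex.I * fderiv ℝ g ζ Complex.I) / 2

/-- The coordinates of a point of `ℂ²`. -/
def coord2 (z : ℂ × ℂ) : Fin 2 → ℂ := ![z.1, z.2]

abbrev E2 := EuclideanSpace ℂ (Fin 2)

theorem exists_linearEquiv_map_eq_I_smul {V W : Type*} [AddCommGroup V] [Module ℝ V]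
    [FiniteDimensional ℝ V] [AddCommGroup W] [Module ℂ W] [Module ℝ W] [IsScalarTower ℝ ℂ W]
    [FiniteDimensional ℂ W] (hVW : Module.finrank ℝ V = Module.finrank ℝ W)
    {j : Module.End ℝ V} (hj : j * j = -1) :
    ∃ e : V ≃ₗ[ℝ] W, ∀ v, e (j v) = Complex.I • e v := by
  -- `j` makes `V` a complex vector space of the same complex dimension as `W`.
  let φ : ℂ →ₐ[ℝ] Module.End ℝ V := Complex.lift ⟨j, hj⟩
  let _ : Module ℂ V := Module.compHom V φ.toRingHom
  have smul_eq (c : ℂ) (v : V) : c • v = φ c v := rfl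
  have : IsScalarTower ℝ ℂ V := ⟨fun r c v => by simp [smul_eq]⟩
  have : FiniteDimensional ℂ V := Module.Finite.right ℝ ℂ V
  have finrank_eq : Module.finrank ℂ V = Module.finrank ℂ W := by
    have finrank_V := Module.finrank_mul_finrank ℝ ℂ V
    have finrank_W := Module.finrank_mul_finrank ℝ ℂ W
    rw [Complex.finrank_real_complex] at finrank_V finrank_W
    lia
  have I_smul (v : V) : Complex.I • v = j v := by simp [smul_eq, φ]
  let e : V ≃ₗ[ℂ] W := LinearEquiv.ofFinrankEq V W finrank_eq
  exact ⟨e.restrictScalars ℝ, fun v => by simp [← I_smul]⟩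

theorem exists_conjContinuousAlgEquiv_eq_Jst {V : Type*} [NormedAddCommGroup V] [NormedSpace ℝ V]
    [FiniteDimensional ℝ V] [FiniteDimensional ℂ F]
    (hVF : Module.finrank ℝ V = Module.finrank ℝ F) {j : V →L[ℝ] V}
    (hj : j.comp j = -ContinuousLinearMap.id ℝ V) :
    ∃ A : V ≃L[ℝ] F, A.conjContinuousAlgEquiv j = Jst F := by
  have j_mul_self : (j : Module.End ℝ V) * j = -1 :=
    LinearMap.ext fun v => by simpa using DFunLike.congr_fun hj v
  obtain ⟨e, he⟩ := exists_linearEquiv_map_eq_I_smul hVF j_mul_self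
  refine ⟨e.toContinuousLinearEquiv, ?_⟩
  ext y : 1
  simpa [Jst] using he (e.symm y)

section Dilation

variable {V G : Type*} [NormedAddCommGroup V] [NormedSpace ℝ V]
  [NormedAddCommGroup G] [NormedSpace ℝ G]

theorem tendsto_smul_of_isBounded {K : Set V} (hK : Bornology.IsBounded K) :
    Tendsto (fun q : ℝ × V => q.1 • q.2) (𝓝 0 ×ˢ 𝓟 K) (𝓝 0) := by
  obtain ⟨C, hC⟩ := hK.exists_norm_le
  refine tendsto_fst.zero_smul_isBoundedUnder_le ⟨C, eventually_map.2 ?_⟩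
  exact eventually_prod_principal_iff.2 (Eventually.of_forall fun _ => hC)

theorem eventually_forall_comp_smul {K : Set V} (hK : Bornology.IsBounded K) {P : V → Prop}
    (hP : ∀ᶠ x in 𝓝 0, P x) : ∀ᶠ t : ℝ in 𝓝 0, ∀ y ∈ K, P (t • y) :=
  eventually_prod_principal_iff.1 ((tendsto_smul_of_isBounded hK).eventually hP)

theorem eventually_forall_norm_pow_smul_comp_smul_sub_le {f : V → G} (hf : ContinuousAt f 0)
    (k : ℕ) {K : Set V} (hK : Bornology.IsBounded K) {ε : ℝ} (hε : 0 < ε) :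
    ∀ᶠ t : ℝ in 𝓝 0, ∀ y ∈ K, ‖t ^ k • f (t • y) - (0 : ℝ) ^ k • f 0‖ ≤ ε := by
  have lim : Tendsto (fun q : ℝ × V => q.1 ^ k • f (q.1 • q.2)) (𝓝 0 ×ˢ 𝓟 K)
      (𝓝 ((0 : ℝ) ^ k • f 0)) :=
    (tendsto_fst.pow k).smul (hf.tendsto.comp (tendsto_smul_of_isBounded hK))
  have close := eventually_prod_principal_iff.1 (lim.eventually (closedBall_mem_nhds _ hε))
  filter_upwards [close] with t ht y hy
  exact mem_closedBall_iff_norm.1 (ht y hy)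

set_option maxSynthPendingDepth 3 in
theorem fderiv_fderiv_comp_smul (g : V → G) (t : ℝ) (y : V) :
    fderiv ℝ (fderiv ℝ fun x => g (t • x)) y = t ^ 2 • fderiv ℝ (fderiv ℝ g) (t • y) := by
  have fderiv_eq : (fderiv ℝ fun x => g (t • x)) = t • fun x => fderiv ℝ g (t • x) :=
    funext fun x => fderiv_comp_smul ..
  rw [fderiv_eq, fderiv_const_smul_field, Pi.smul_apply, fderiv_comp_smul, smul_smul, sq]

end Dilation

theorem eventually_c2Dist_comp_smul_le {G : Type*} [NormedAddCommGroup G] [NormedSpace ℝ G]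
    {g : E → G} (hg : ContDiffAt ℝ 2 g 0) {K : Set E} (hK : Bornology.IsBounded K)
    {ε : ℝ} (hε : 0 < ε) :
    ∀ᶠ t : ℝ in 𝓝 0, c2Dist (fun y => g (t • y)) (fun _ => g 0) K ≤ ε := by
  have hg₁ : ContDiffAt ℝ 1 (fderiv ℝ g) 0 := hg.fderiv_right (by norm_num)
  have hg₂ : ContDiffAt ℝ 0 (fderiv ℝ (fderiv ℝ g)) 0 := hg₁.fderiv_right (by norm_num)
  filter_upwards [
    eventually_forall_norm_pow_smul_comp_smul_sub_le hg.continuousAt 0 hK hε,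
    eventually_forall_norm_pow_smul_comp_smul_sub_le hg₁.continuousAt 1 hK hε,
    eventually_forall_norm_pow_smul_comp_smul_sub_le hg₂.continuousAt 2 hK hε]
    with t bound₀ bound₁ bound₂
  refine Real.iSup_le (fun ⟨y, hy⟩ => max_le ?_ (max_le ?_ ?_)) hε.le
  · simpa using bound₀ y hy
  · simpa [fderiv_comp_smul] using bound₁ y hy
  · simpa [fderiv_fderiv_comp_smul] using bound₂ y hy

theorem isDiffeoOn_continuousAffineEquiv_preimage (φ : E ≃ᴬ[ℝ] F) (s : Set F) :
    IsDiffeoOn φ φ.symm (φ ⁻¹' s) s :=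
  ⟨φ.toContinuousAffineMap.contDiff.contDiffOn, φ.symm.toContinuousAffineMap.contDiff.contDiffOn,
    fun _ hx => hx, fun y hy => by simpa using hy, fun x _ => φ.symm_apply_apply x,
    fun y _ => φ.apply_symm_apply y⟩

section AffineChart

variable {V W : Type*} [NormedAddCommGroup V] [NormedSpace ℝ V]
  [NormedAddCommGroup W] [NormedSpace ℝ W]

/-- The push-forward `z_* J` of a field `J` of endomorphisms by a diffeomorphism `z`, whose inverse
`w` is a separate argument. -/
def pushforwardField (z : V → W) (w : W → V) (J : V → V →L[ℝ] V) (y : W) : W →L[ℝ] W :=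
  (fderiv ℝ z (w y)).comp ((J (w y)).comp (fderiv ℝ w y))

/-- The affine coordinates `x ↦ t⁻¹ • A (x - p)` centred at `p`: those in which the unit ball
represents the ball of radius `|t|` of the coordinates `A (x - p)`. -/
def affineChart (p : V) (A : V ≃L[ℝ] W) (t : ℝˣ) : V ≃ᴬ[ℝ] W :=
  (ContinuousAffineEquiv.vaddConst ℝ p).symm.trans
    (A.trans (ContinuousLinearEquiv.smulLeft t⁻¹)).toContinuousAffineEquiv

variable (p : V) (A : V ≃L[ℝ] W) (t : ℝˣ)

theorem affineChart_apply (x : V) : affineChart p A t x = t⁻¹ • A (x - p) := rfl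

theorem affineChart_symm_apply (y : W) : (affineChart p A t).symm y = A.symm (t • y) + p :=
  ((affineChart p A t).symm_apply_eq).2 <| by simp [affineChart_apply]

theorem affineChart_self : affineChart p A t p = 0 := by simp [affineChart_apply]

theorem affineChart_symm_zero : (affineChart p A t).symm 0 = p := by
  simp [affineChart_symm_apply]

theorem hasFDerivAt_affineChart (x : V) :
    HasFDerivAt (affineChart p A t) (t⁻¹ • (A : V →L[ℝ] W)) x :=
  (A.hasFDerivAt.comp x ((hasFDerivAt_id x).sub_const p)).const_smul t⁻¹

theorem hasFDerivAt_affineChart_symm (y : W) :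
    HasFDerivAt (affineChart p A t).symm (t • (A.symm : W →L[ℝ] V)) y := by
  have hasFDerivAt_dilation : HasFDerivAt (fun y : W => t • y) (t • ContinuousLinearMap.id ℝ W) y :=
    (hasFDerivAt_id y).const_smul t
  have hasFDerivAt_formula := (A.symm.hasFDerivAt.comp y hasFDerivAt_dilation).add_const p
  convert hasFDerivAt_formula using 1
  · exact funext (affineChart_symm_apply p A t)
  · ext v
    simp

theorem affineChart_symm_eq_one_smul (y : W) :
    (affineChart p A t).symm y = (affineChart p A 1).symm (t • y) := by
  simp only [affineChart_symm_apply, one_smul]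

theorem pushforwardField_affineChart (J : V → V →L[ℝ] V) (y : W) :
    pushforwardField (affineChart p A t) (affineChart p A t).symm J y =
      A.conjContinuousAlgEquiv (J ((affineChart p A t).symm y)) := by
  ext v : 1
  simp [pushforwardField, (hasFDerivAt_affineChart p A t _).fderiv,
    (hasFDerivAt_affineChart_symm p A t y).fderiv]

theorem pushforwardField_affineChart_eq_one_smul (J : V → V →L[ℝ] V) (y : W) :
    pushforwardField (affineChart p A t) (affineChart p A t).symm J y =
      pushforwardField (affineChart p A 1) (affineChart p A 1).symm J (t • y) := by
  simp only [pushforwardField_affineChart, affineChart_symm_eq_one_smul p A t]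

theorem pushforwardField_affineChart_zero (J : V → V →L[ℝ] V) :
    pushforwardField (affineChart p A t) (affineChart p A t).symm J 0 =
      A.conjContinuousAlgEquiv (J p) := by
  rw [pushforwardField_affineChart, affineChart_symm_zero]

theorem contDiffAt_pushforwardField_affineChart {n : WithTop ℕ∞} {J : V → V →L[ℝ] V} {y : W}
    (hJ : ContDiffAt ℝ n J ((affineChart p A t).symm y)) :
    ContDiffAt ℝ n (pushforwardField (affineChart p A t) (affineChart p A t).symm J) y := by
  have hJ_chart : ContDiffAt ℝ n (fun y => J ((affineChart p A t).symm y)) y :=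
    hJ.comp y (affineChart p A t).symm.toContinuousAffineMap.contDiff.contDiffAt
  rw [funext (pushforwardField_affineChart p A t J)]
  exact (A.arrowCongr A).contDiff.contDiffAt.comp y hJ_chart

end AffineChart

theorem exists_affineChart_c2Dist_pushforwardField_le {V : Type*} [NormedAddCommGroup V]
    [NormedSpace ℝ V] {p : V} (A : V ≃L[ℝ] F) {Ω : Set V} (hΩ : Ω ∈ 𝓝 p) {J : V → V →L[ℝ] V}
    (hJ : ContDiffAt ℝ 2 J p) {K : Set F} (hK : Bornology.IsBounded K) {ε : ℝ} (hε : 0 < ε) :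
    ∃ t : ℝˣ, MapsTo (affineChart p A t).symm K Ω ∧
      ContDiffOn ℝ 2 (pushforwardField (affineChart p A t) (affineChart p A t).symm J) K ∧
      c2Dist (pushforwardField (affineChart p A t) (affineChart p A t).symm J)
        (fun _ => A.conjContinuousAlgEquiv (J p)) K ≤ ε := by
  have eventually_near_p : ∀ᶠ x in 𝓝 p, x ∈ Ω ∧ ContDiffAt ℝ 2 J x :=
    Filter.Eventually.and hΩ (hJ.eventually (by simp))
  have tendsto_chart : Tendsto (affineChart p A 1).symm (𝓝 0) (𝓝 p) :=
    (affineChart p A 1).symm.continuous.tendsto' 0 p (affineChart_symm_zero p A 1)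
  have eventually_near_zero := tendsto_chart.eventually eventually_near_p
  have contDiffAt_zero :=
    contDiffAt_pushforwardField_affineChart p A 1 eventually_near_zero.self_of_nhds.2
  have eventually_small := (eventually_forall_comp_smul hK eventually_near_zero).and
    (eventually_c2Dist_comp_smul_le contDiffAt_zero hK hε)
  obtain ⟨t, ⟨near_of_mem, c2Dist_le⟩, t_ne_zero⟩ :=
    ((eventually_small.filter_mono nhdsWithin_le_nhds).and
      (eventually_mem_nhdsWithin (a := 0) (s := {0}ᶜ))).exists
  lift t to ℝˣ using IsUnit.mk0 t t_ne_zero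
  refine ⟨t, fun y hy => ?_, fun y hy => ?_, ?_⟩
  · rw [affineChart_symm_eq_one_smul]
    exact (near_of_mem y hy).1
  · refine (contDiffAt_pushforwardField_affineChart p A t ?_).contDiffWithinAt
    rw [affineChart_symm_eq_one_smul]
    exact (near_of_mem y hy).2
  · rw [pushforwardField_affineChart_zero] at c2Dist_le
    rwa [funext (pushforwardField_affineChart_eq_one_smul p A t J)]

theorem statement3_general [FiniteDimensional ℂ E] [FiniteDimensional ℂ F]
    (hEF : Module.finrank ℂ E = Module.finrank ℂ F) {Ω : Set E} {J : E → E →L[ℝ] E} {p : E}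
    (hΩ : Ω ∈ 𝓝 p) (hJ : ContDiffAt ℝ 2 J p)
    (hJp : (J p).comp (J p) = -ContinuousLinearMap.id ℝ E) {lam0 : ℝ} (hlam0 : 0 < lam0) :
    ∃ (U₀ : Set E) (z : E → F) (w : F → E), IsOpen U₀ ∧ U₀ ⊆ Ω ∧ p ∈ U₀ ∧
      IsDiffeoOn z w U₀ (ball (0 : F) 1) ∧ z p = 0 ∧
      (fderiv ℝ z p).comp ((J p).comp (fderiv ℝ w 0)) = Jst F ∧
      ∃ Jhat : F → F →L[ℝ] F,
        (∀ y ∈ ball (0 : F) 1, Jhat y = pushforwardField z w J y) ∧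
        ContDiffOn ℝ 2 Jhat (closedBall (0 : F) 1) ∧
        c2Dist Jhat (fun _ => Jst F) (closedBall (0 : F) 1) ≤ lam0 := by
  have : FiniteDimensional ℝ E := Module.Finite.trans ℂ E
  obtain ⟨A, hA⟩ := exists_conjContinuousAlgEquiv_eq_Jst (F := F)
    (by rw [finrank_real_of_complex, finrank_real_of_complex, hEF]) hJp
  obtain ⟨t, mapsTo_Ω, contDiffOn_Jhat, c2Dist_le⟩ :=
    exists_affineChart_c2Dist_pushforwardField_le A hΩ hJ
      (isBounded_closedBall (x := (0 : F)) (r := 1)) hlam0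
  let φ := affineChart p A t
  refine ⟨φ ⁻¹' ball 0 1, φ, φ.symm, isOpen_ball.preimage φ.continuous, fun x hx => ?_, ?_,
    isDiffeoOn_continuousAffineEquiv_preimage φ _, affineChart_self p A t, ?_,
    pushforwardField φ φ.symm J, fun _ _ => rfl, contDiffOn_Jhat, hA ▸ c2Dist_le⟩
  · simpa [φ] using mapsTo_Ω (ball_subset_closedBall hx)
  · simp [φ, affineChart_self]
  · rw [← hA, ← pushforwardField_affineChart_zero p A t, pushforwardField, affineChart_symm_zero]

/-- **Normalization lemma.** Every almost complex structure can be represented locally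
as a small `C²` deformation of the standard structure: for every `λ₀ > 0` there is a
coordinate diffeomorphism `z : U₀ → 𝔹₂` with `z(p) = 0`,
`Dz(p) ∘ J(p) ∘ (Dz(p))⁻¹ = J_st` and `‖z_*(J) − J_st‖_{C²(𝔹̄₂)} ≤ λ₀`. -/
theorem statement3
    (Ω : Set E2) (hΩ : IsOpen Ω) (J : E2 → E2 →L[ℝ] E2) (hJ : IsACS Ω J)
    (p : E2) (hp : p ∈ Ω) (lam0 : ℝ) (hlam0 : 0 < lam0) :
    ∃ (U₀ : Set E2) (z w : E2 → E2), IsOpen U₀ ∧ U₀ ⊆ Ω ∧ p ∈ U₀ ∧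
      IsDiffeoOn z w U₀ (ball (0 : E2) 1) ∧ z p = 0 ∧
      (fderiv ℝ z p).comp ((J p).comp (fderiv ℝ w 0)) = Jst E2 ∧
      ∃ Jhat : E2 → E2 →L[ℝ] E2,
        (∀ y ∈ ball (0 : E2) 1,
          Jhat y = (fderiv ℝ z (w y)).comp ((J (w y)).comp (fderiv ℝ w y))) ∧
        ContDiffOn ℝ 2 Jhat (closedBall (0 : E2) 1) ∧
        c2Dist Jhat (fun _ => Jst E2) (closedBall (0 : E2) 1) ≤ lam0 :=
  statement3_general rfl (hΩ.mem_nhds hp)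
    ((hJ.smooth.contDiffAt (hΩ.mem_nhds hp)).of_le (WithTop.coe_le_coe.2 le_top))
    (hJ.sq p hp) hlam0

end
end

section
/- Let Ω be an open set in ℝ^{2n} with an almost complex structure J and let u be a C² real-valued function on Ω. Then L^J(u)(x)(X) ≥ 0 for every x ∈ Ω and every X ∈ ℝ^{2n} if and only if for every C² J-holomorphic disc f : Δ → Ω the composition u ∘ f is subharmonic on Δ, i.e. the Laplacian of u ∘ f is nonnegative on Δ. -/
open Metric Set Filter Topology Asymptotics

noncomputable section

variable {E F : Type*} [NormedAddCommGroup E] [NormedSpace ℂ E]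
  [NormedAddCommGroup F] [NormedSpace ℂ F]

/-!
Along a `J`-holomorphic disc `f` the chain rule and the symmetry of `D²f` give
`Δ(u ∘ f) = L^J(u)(f)(∂f/∂x)`, which settles one direction. For the other, `L^J(u)` is continuous
and homogeneous of degree two in the direction, so it is enough to approximate
every `(p, X)` by pairs consisting of the centre `f 0` of a `J`-holomorphic disc and a positive
multiple of its derivative `∂f/∂x` at `0`.

In affine coordinates with `p = 0` and `J(0) = J_st`, a map is `J`-holomorphic near `0` if and only
if `∂f/∂ζ̄ = R(f) ∂f/∂ζ`, where the Beltrami coefficient `R` is conjugate linear and `R(0) = 0`.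
Rescaling `f` by `t → 0` and cutting off in `ζ` makes the coefficient small in `C³`, and one looks
for a solution `ζX + φ` with `φ` small. Instead of solving for `φ` in a Hölder space, one solves for
the pair `(φ, α)`, where `α` stands for `∂φ/∂ζ` and satisfies the equation obtained by
differentiating the Beltrami equation. Since `R` is conjugate linear, this is a system
`∂(φ, α)/∂ζ̄ = H(ζ, φ, α)` without derivatives of `φ` and `α` on the right, and a fixed point of the
Cauchy transform of `H` is found by contraction in the space of `C¹` maps with uniform bounds. The
defect `∂φ/∂ζ - α` solves a linear equation with small coefficients, so it vanishes, and then both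
derivatives of `φ` are `C¹`.
-/

/-! ### The Cauchy transform -/

section CauchyTransform

open MeasureTheory
open scoped Convolution

/-- The Cauchy kernel `1 / (π w)`, the fundamental solution of `∂/∂ζ̄` on `ℂ`. -/
def cauchyKernel (w : ℂ) : ℂ := (Real.pi * w)⁻¹

/-- The Cauchy transform `z ↦ (1/π) ∫ g (z - w) / w dw`, the solution operator of the
`∂̄`-equation for compactly supported right-hand sides. -/
def cauchyTransform (g : ℂ → E) : ℂ → E :=
  cauchyKernel ⋆[ContinuousLinearMap.lsmul ℝ ℂ, volume] g

lemma cauchyTransform_apply (g : ℂ → E) (z : ℂ) :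
    cauchyTransform g z = ∫ w, cauchyKernel w • g (z - w) := rfl

lemma norm_cauchyKernel (w : ℂ) : ‖cauchyKernel w‖ = Real.pi⁻¹ * ‖w‖⁻¹ := by
  rw [cauchyKernel, norm_inv, norm_mul, Complex.norm_real, Real.norm_of_nonneg Real.pi_pos.le,
    mul_inv]

lemma locallyIntegrable_cauchyKernel : LocallyIntegrable cauchyKernel := by
  have decay : ∀ w, ‖cauchyKernel w‖ ≤ Real.pi⁻¹ * ‖w‖ ^ (-1 : ℝ) := fun w => by
    rw [norm_cauchyKernel, Real.rpow_neg_one]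
  refine locallyIntegrable_of_norm_le_rpow ?_ ?_ (Eventually.of_forall decay)
    (measurable_id.const_mul _).inv.aestronglyMeasurable <;>
  norm_num [Complex.finrank_real_complex]

lemma hasCompactSupport_of_eq_zero_of_lt_norm {V : Type*} [Zero V] {g : ℂ → V} {r : ℝ}
    (h : ∀ w, r < ‖w‖ → g w = 0) : HasCompactSupport g :=
  HasCompactSupport.intro (isCompact_closedBall 0 r) fun w hw => h w (by simpa using hw)

lemma convolutionExists_cauchyKernel {g : ℂ → E} (hg : Continuous g) (hs : HasCompactSupport g) :
    ConvolutionExists cauchyKernel g (ContinuousLinearMap.lsmul ℝ ℂ) :=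
  hs.convolutionExists_right _ locallyIntegrable_cauchyKernel hg

lemma integrable_cauchyKernel_smul {g : ℂ → E} (hg : Continuous g) (hs : HasCompactSupport g)
    (z : ℂ) : Integrable fun w => cauchyKernel w • g (z - w) :=
  convolutionExists_cauchyKernel hg hs z

lemma continuous_cauchyTransform {g : ℂ → E} (hg : Continuous g) (hs : HasCompactSupport g) :
    Continuous (cauchyTransform g) :=
  hs.continuous_convolution_right _ locallyIntegrable_cauchyKernel hg

lemma cauchyTransform_sub {g h : ℂ → E} (hg : Continuous g) (hgs : HasCompactSupport g)
    (hh : Continuous h) (hhs : HasCompactSupport h) :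
    cauchyTransform (g - h) = cauchyTransform g - cauchyTransform h := by
  ext z
  simp only [cauchyTransform_apply, Pi.sub_apply, smul_sub]
  exact integral_sub (integrable_cauchyKernel_smul hg hgs z) (integrable_cauchyKernel_smul hh hhs z)

lemma map_cauchyTransform [CompleteSpace E] [CompleteSpace F] (L : E →L[ℂ] F) {g : ℂ → E}
    (hg : Continuous g) (hs : HasCompactSupport g) (z : ℂ) :
    L (cauchyTransform g z) = cauchyTransform (fun w => L (g w)) z := by
  simp only [cauchyTransform_apply,
    ← L.integral_comp_comm (integrable_cauchyKernel_smul hg hs z), map_smul]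

lemma hasFDerivAt_cauchyTransform [CompleteSpace E] {g : ℂ → E} (hg : ContDiff ℝ 1 g)
    (hs : HasCompactSupport g) (z : ℂ) :
    HasFDerivAt (cauchyTransform g) (cauchyTransform (fderiv ℝ g) z) z :=
  hs.hasFDerivAt_convolution_right _ locallyIntegrable_cauchyKernel hg z

/-- The norm of the Cauchy transform as an operator from the bounded functions supported in
the closed disc of radius `r` to the bounded functions. -/
def cauchyNorm (r : ℝ) : ℝ := ⨆ z, ∫ w in closedBall z r, ‖cauchyKernel w‖

lemma bddAbove_range_integral_norm_cauchyKernel (r : ℝ) :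
    BddAbove (range fun z => ∫ w in closedBall z r, ‖cauchyKernel w‖) := by
  have hint : ∀ z s, IntegrableOn (fun w => ‖cauchyKernel w‖) (closedBall z s) := fun z s =>
    (locallyIntegrable_cauchyKernel.integrableOn_isCompact (isCompact_closedBall z s)).norm
  refine ⟨(∫ w in closedBall 0 1, ‖cauchyKernel w‖) + volume.real (closedBall (0 : ℂ) r), ?_⟩
  rintro _ ⟨z, rfl⟩
  have near : ∫ w in closedBall z r ∩ closedBall 0 1, ‖cauchyKernel w‖ ≤
      ∫ w in closedBall 0 1, ‖cauchyKernel w‖ :=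
    setIntegral_mono_set (hint 0 1) (Eventually.of_forall fun _ => norm_nonneg _)
      inter_subset_right.eventuallyLE
  have kernel_le : ∀ w ∈ closedBall z r \ closedBall 0 1, ‖‖cauchyKernel w‖‖ ≤ 1 := by
    intro w hw
    have hw1 : 1 < ‖w‖ := by simpa using hw.2
    rw [norm_norm, norm_cauchyKernel]
    exact mul_le_one₀ (inv_le_one_of_one_le₀ (by linarith [Real.pi_gt_three])) (by positivity)
      (inv_le_one_of_one_le₀ hw1.le)
  have far : ∫ w in closedBall z r \ closedBall 0 1, ‖cauchyKernel w‖ ≤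
      volume.real (closedBall (0 : ℂ) r) := by
    refine (le_abs_self _).trans ((norm_setIntegral_le_of_norm_le_const
      ((measure_mono sdiff_subset).trans_lt measure_closedBall_lt_top) kernel_le).trans ?_)
    rw [one_mul, ← Measure.addHaar_real_closedBall_center volume z]
    exact measureReal_mono sdiff_subset measure_closedBall_lt_top.ne
  change ∫ w in closedBall z r, ‖cauchyKernel w‖ ≤ _
  rw [← integral_inter_add_sdiff (measurableSet_closedBall (x := (0 : ℂ)) (ε := 1)) (hint z r)]
  exact add_le_add near far

lemma integral_norm_cauchyKernel_le (z : ℂ) (r : ℝ) :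
    ∫ w in closedBall z r, ‖cauchyKernel w‖ ≤ cauchyNorm r :=
  le_ciSup (bddAbove_range_integral_norm_cauchyKernel r) z

lemma norm_cauchyTransform_le {g : ℂ → E} {r M : ℝ} (hM : ∀ w, ‖g w‖ ≤ M)
    (hs : ∀ w, r < ‖w‖ → g w = 0) (z : ℂ) : ‖cauchyTransform g z‖ ≤ cauchyNorm r * M := by
  have hbound : ∀ w, ‖cauchyKernel w • g (z - w)‖ ≤
      (closedBall z r).indicator (fun w => ‖cauchyKernel w‖ * M) w := by
    intro w
    by_cases hw : w ∈ closedBall z r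
    · rw [indicator_of_mem hw, norm_smul]
      gcongr
      exact hM _
    · rw [indicator_of_notMem hw, hs (z - w), smul_zero, norm_zero]
      simpa [dist_eq_norm, norm_sub_rev] using hw
  have hint : IntegrableOn (fun w => ‖cauchyKernel w‖ * M) (closedBall z r) :=
    (locallyIntegrable_cauchyKernel.integrableOn_isCompact
      (isCompact_closedBall z r)).norm.mul_const M
  rw [cauchyTransform_apply]
  refine (norm_integral_le_of_norm_le ((integrable_indicator_iff measurableSet_closedBall).2 hint)
    (Eventually.of_forall hbound)).trans ?_
  rw [integral_indicator measurableSet_closedBall, integral_mul_const]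
  exact mul_le_mul_of_nonneg_right (integral_norm_cauchyKernel_le z r)
    ((norm_nonneg _).trans (hM 0))

lemma norm_cauchyTransform_sub_le {g h : ℂ → E} (hg : Continuous g) (hh : Continuous h) {r M : ℝ}
    (hgs : ∀ w, r < ‖w‖ → g w = 0) (hhs : ∀ w, r < ‖w‖ → h w = 0)
    (hM : ∀ w, ‖g w - h w‖ ≤ M) (z : ℂ) :
    ‖cauchyTransform g z - cauchyTransform h z‖ ≤ cauchyNorm r * M := by
  rw [← Pi.sub_apply, ← cauchyTransform_sub hg (hasCompactSupport_of_eq_zero_of_lt_norm hgs) hh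
    (hasCompactSupport_of_eq_zero_of_lt_norm hhs)]
  exact norm_cauchyTransform_le hM
    (fun w hw => sub_eq_zero.2 ((hgs w hw).trans (hhs w hw).symm)) z

end CauchyTransform

/-! ### The Cauchy–Pompeiu formula -/

section CauchyPompeiu

open MeasureTheory
open scoped ComplexConjugate

/-- The Wirtinger operator `∂/∂ζ` on functions of a complex variable with values in a complex
normed space. -/
def del (g : ℂ → E) (z : ℂ) : E :=
  (2⁻¹ : ℂ) • (fderiv ℝ g z 1 - Complex.I • fderiv ℝ g z Complex.I)

/-- The Wirtinger operator `∂/∂ζ̄` on functions of a complex variable with values in a complex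
normed space. -/
def dbar (g : ℂ → E) (z : ℂ) : E :=
  (2⁻¹ : ℂ) • (fderiv ℝ g z 1 + Complex.I • fderiv ℝ g z Complex.I)

lemma fderiv_apply_one (g : ℂ → E) (z : ℂ) : fderiv ℝ g z 1 = del g z + dbar g z := by
  rw [del, dbar]
  module

lemma fderiv_apply_I (g : ℂ → E) (z : ℂ) :
    fderiv ℝ g z Complex.I = Complex.I • (del g z - dbar g z) := by
  have hsub : del g z - dbar g z = -(Complex.I • fderiv ℝ g z Complex.I) := by
    rw [del, dbar]
    module
  rw [hsub, smul_neg, smul_smul, Complex.I_mul_I, neg_smul, one_smul, neg_neg]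

lemma continuous_del {g : ℂ → E} (hg : ContDiff ℝ 1 g) : Continuous (del g) := by
  have hDg := hg.continuous_fderiv one_ne_zero
  exact ((hDg.clm_apply continuous_const).sub
    ((hDg.clm_apply continuous_const).const_smul Complex.I)).const_smul (2⁻¹ : ℂ)

lemma hasCompactSupport_del {g : ℂ → E} (hg : HasCompactSupport g) : HasCompactSupport (del g) :=
  (hg.fderiv ℝ).comp_left
    (g := fun L : ℂ →L[ℝ] E => (2⁻¹ : ℂ) • (L 1 - Complex.I • L Complex.I)) (by simp)

lemma conj_smul_map_one_add (L : ℂ →L[ℝ] E) (c : ℂ) :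
    conj c • (L 1 + Complex.I • L Complex.I) = L c + Complex.I • L (c * Complex.I) := by
  have hL : ∀ w : ℂ, L w = (w.re : ℂ) • L 1 + (w.im : ℂ) • L Complex.I := fun w => by
    conv_lhs => rw [show w = w.re • (1 : ℂ) + w.im • Complex.I by simp, map_add, map_smul, map_smul]
    simp only [Complex.coe_smul]
  have hconj : conj c = c.re - c.im * Complex.I := by apply Complex.ext <;> simp
  rw [hL c, hL (c * Complex.I), hconj, Complex.mul_I_re, Complex.mul_I_im, Complex.ofReal_neg]
  match_scalars
  · ring
  · linear_combination (-(c.im : ℂ)) * Complex.I_mul_I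

lemma mul_cauchyKernel_circle {r : ℝ} (hr : r ≠ 0) (θ : ℝ) :
    (r : ℂ) * cauchyKernel (r * circleMap 0 1 θ) = (Real.pi : ℂ)⁻¹ * conj (circleMap 0 1 θ) := by
  have hconj : conj (circleMap 0 1 θ) = (circleMap 0 1 θ)⁻¹ := by
    rw [Complex.inv_def, Complex.normSq_eq_norm_sq, norm_circleMap_zero]
    simp
  have hr' : (r : ℂ) ≠ 0 := Complex.ofReal_ne_zero.2 hr
  rw [hconj, cauchyKernel, mul_inv, mul_inv]
  field_simp

lemma integral_Ioi_fderiv_ray [CompleteSpace E] {g : ℂ → E} (hg : ContDiff ℝ 1 g)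
    (hs : HasCompactSupport g) (z : ℂ) {c : ℂ} (hc : ‖c‖ = 1) :
    ∫ r in Ioi (0 : ℝ), fderiv ℝ g (z - r * c) c = g z := by
  have isometry : Isometry fun r : ℝ => z - r * c :=
    Isometry.of_dist_eq fun r s => by
      rw [dist_sub_left, dist_eq_norm, ← sub_mul, ← Complex.ofReal_sub, norm_mul, hc, mul_one,
        Complex.norm_real, dist_eq_norm]
  have hderiv : ∀ r : ℝ, deriv (fun r : ℝ => -g (z - r * c)) r = fderiv ℝ g (z - r * c) c := by
    intro r
    have hline : HasDerivAt (fun r : ℝ => z - r * c) (-c) r := by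
      simpa using ((hasDerivAt_id r).ofReal_comp.mul_const c).const_sub z
    exact ((hg.differentiable one_ne_zero _).hasFDerivAt.comp_hasDerivAt r hline).neg.deriv.trans
      (by simp)
  simp_rw [← hderiv]
  have hsupp : HasCompactSupport fun r : ℝ => -g (z - r * c) :=
    (hs.comp_isClosedEmbedding isometry.isClosedEmbedding).neg
  have hsmooth : ContDiff ℝ 1 fun r : ℝ => -g (z - r * c) :=
    (hg.comp (contDiff_const.sub (Complex.ofRealCLM.contDiff.mul contDiff_const))).neg
  rw [hsupp.integral_Ioi_deriv_eq hsmooth]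
  simp

lemma integral_fderiv_circleMap [CompleteSpace E] {g : ℂ → E} (hg : ContDiff ℝ 1 g) (z : ℂ)
    {r : ℝ} (hr : r ≠ 0) :
    ∫ θ in -Real.pi..Real.pi,
      fderiv ℝ g (circleMap z r θ) (circleMap 0 1 θ * Complex.I) = 0 := by
  have hd : ∀ θ ∈ uIcc (-Real.pi) Real.pi, HasDerivAt (fun θ => r⁻¹ • g (circleMap z r θ))
      (fderiv ℝ g (circleMap z r θ) (circleMap 0 1 θ * Complex.I)) θ := by
    intro θ _
    refine (((hg.differentiable one_ne_zero _).hasFDerivAt.comp_hasDerivAt θ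
      (hasDerivAt_circleMap z r θ)).const_smul r⁻¹).congr_deriv ?_
    rw [← map_smul]
    congr 1
    simp [circleMap, ← mul_assoc, hr]
  have hcont : Continuous fun θ => fderiv ℝ g (circleMap z r θ) (circleMap 0 1 θ * Complex.I) :=
    ((hg.continuous_fderiv one_ne_zero).comp (continuous_circleMap z r)).clm_apply
      ((continuous_circleMap 0 1).mul continuous_const)
  rw [intervalIntegral.integral_eq_sub_of_hasDerivAt hd (hcont.intervalIntegrable _ _), sub_eq_zero]
  simp [circleMap]

lemma integrableOn_polarCoord_target {V : Type*} [NormedAddCommGroup V] {f : ℝ × ℝ → V}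
    (hf : Continuous f) {R : ℝ} (h : ∀ p : ℝ × ℝ, R < p.1 → f p = 0) :
    IntegrableOn f polarCoord.target := by
  refine IntegrableOn.of_forall_sdiff_eq_zero
    (hf.continuousOn.integrableOn_compact
      (isCompact_Icc.prod isCompact_Icc : IsCompact (Icc 0 R ×ˢ Icc (-Real.pi) Real.pi)))
    polarCoord.open_target.measurableSet fun p hp => h p ?_
  by_contra hle
  exact hp.2 ⟨⟨le_of_lt hp.1.1, not_lt.mp hle⟩, ⟨hp.1.2.1.le, hp.1.2.2.le⟩⟩

lemma integrableOn_polarCoord_fderiv {g : ℂ → E} (hg : ContDiff ℝ 1 g) (hs : HasCompactSupport g)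
    (z : ℂ) {c : ℝ → ℂ} (hc : Continuous c) :
    IntegrableOn (fun p : ℝ × ℝ => fderiv ℝ g (z - p.1 * circleMap 0 1 p.2) (c p.2))
      polarCoord.target := by
  obtain ⟨R, hR⟩ := ((hs.fderiv ℝ).comp_homeomorph
    (Homeomorph.subLeft z)).isCompact.isBounded.exists_norm_le
  have hDg : Continuous fun p : ℝ × ℝ => fderiv ℝ g (z - p.1 * circleMap 0 1 p.2) :=
    (hg.continuous_fderiv one_ne_zero).comp (by fun_prop)
  refine integrableOn_polarCoord_target (hDg.clm_apply (by fun_prop)) (R := R) fun p hp => ?_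
  by_contra hne
  have hp_le := hR (p.1 * circleMap 0 1 p.2)
    (subset_tsupport _ fun h0 => hne (congrArg (· (c p.2)) h0))
  rw [norm_mul, norm_circleMap_zero, Complex.norm_real, abs_one, mul_one] at hp_le
  exact hp.not_ge ((le_abs_self _).trans hp_le)

lemma integral_polarCoord_radial [CompleteSpace E] {g : ℂ → E} (hg : ContDiff ℝ 1 g)
    (hs : HasCompactSupport g) (z : ℂ) :
    ∫ p in polarCoord.target, fderiv ℝ g (z - p.1 * circleMap 0 1 p.2) (circleMap 0 1 p.2) =
      (2 * Real.pi : ℂ) • g z := by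
  have hint := integrableOn_polarCoord_fderiv hg hs z (continuous_circleMap 0 1)
  rw [polarCoord_target, Measure.volume_eq_prod] at hint ⊢
  rw [IntegrableOn, ← Measure.prod_restrict] at hint
  rw [← Measure.prod_restrict, integral_prod_symm _ hint]
  simp only [fun θ => integral_Ioi_fderiv_ray hg hs z
    ((norm_circleMap_zero 1 θ).trans abs_one)]
  rw [setIntegral_const, Real.volume_real_Ioo_of_le (by linarith [Real.pi_pos]),
    sub_neg_eq_add, ← two_mul, ← Complex.coe_smul]
  push_cast
  rfl

lemma integral_polarCoord_angular [CompleteSpace E] {g : ℂ → E} (hg : ContDiff ℝ 1 g)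
    (hs : HasCompactSupport g) (z : ℂ) :
    ∫ p in polarCoord.target,
      fderiv ℝ g (z - p.1 * circleMap 0 1 p.2) (circleMap 0 1 p.2 * Complex.I) = 0 := by
  have hint := integrableOn_polarCoord_fderiv hg hs z
    (c := fun θ => circleMap 0 1 θ * Complex.I) (by fun_prop)
  rw [polarCoord_target, Measure.volume_eq_prod] at hint ⊢
  rw [setIntegral_prod _ hint]
  refine setIntegral_eq_zero_of_forall_eq_zero fun r (hr : 0 < r) => ?_
  have hcircle : ∀ θ, z - r * circleMap 0 1 θ = circleMap z (-r) θ := fun θ => by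
    simp [circleMap, sub_eq_add_neg]
  simp only [hcircle]
  rw [← integral_Ioc_eq_integral_Ioo,
    ← intervalIntegral.integral_of_le (by linarith [Real.pi_pos]),
    integral_fderiv_circleMap hg z (neg_ne_zero.2 hr.ne')]

lemma cauchyKernel_smul_dbar_polar (g : ℂ → E) (z : ℂ) {r : ℝ} (hr : r ≠ 0) (θ : ℝ) :
    r • cauchyKernel (r * circleMap 0 1 θ) • dbar g (z - r * circleMap 0 1 θ) =
      (2 * Real.pi : ℂ)⁻¹ • (fderiv ℝ g (z - r * circleMap 0 1 θ) (circleMap 0 1 θ) +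
        Complex.I • fderiv ℝ g (z - r * circleMap 0 1 θ) (circleMap 0 1 θ * Complex.I)) := by
  rw [← Complex.coe_smul, smul_smul, mul_cauchyKernel_circle hr, dbar, ← conj_smul_map_one_add,
    smul_smul, smul_smul, mul_inv, mul_comm (2 : ℂ)⁻¹, mul_right_comm]

/-- In polar coordinates `w = r e^{iθ}` the integrand `∂̄g(z - w) / (π w) r` splits into a radial
derivative, whose integral along each ray is `g z`, and an angular one, whose integral along each
circle vanishes. -/
theorem cauchyTransform_dbar [CompleteSpace E] {g : ℂ → E} (hg : ContDiff ℝ 1 g)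
    (hs : HasCompactSupport g) : cauchyTransform (dbar g) = g := by
  ext z
  have hsymm : ∀ p, Complex.polarCoord.symm p = p.1 * circleMap 0 1 p.2 := fun p => by
    simp [Complex.polarCoord_symm_apply, circleMap, Complex.exp_mul_I]
  have hradial := integrableOn_polarCoord_fderiv hg hs z (continuous_circleMap 0 1)
  have hangular := integrableOn_polarCoord_fderiv hg hs z
    (c := fun θ => circleMap 0 1 θ * Complex.I) (by fun_prop)
  rw [cauchyTransform_apply, ← Complex.integral_comp_polarCoord_symm]
  simp only [hsymm]
  rw [setIntegral_congr_fun polarCoord.open_target.measurableSet fun p hp =>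
      cauchyKernel_smul_dbar_polar g z (ne_of_gt hp.1) p.2, integral_smul,
    integral_add hradial (hangular.fun_smul Complex.I), integral_smul,
    integral_polarCoord_radial hg hs, integral_polarCoord_angular hg hs, smul_zero, add_zero,
    smul_smul, inv_mul_cancel₀ (mul_ne_zero two_ne_zero
      (Complex.ofReal_ne_zero.2 Real.pi_ne_zero)), one_smul]

lemma fderiv_cauchyTransform_apply [CompleteSpace E] {g : ℂ → E} (hg : ContDiff ℝ 1 g)
    (hs : HasCompactSupport g) (z h : ℂ) :
    fderiv ℝ (cauchyTransform g) z h = cauchyTransform (fun w => fderiv ℝ g w h) z := by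
  rw [(hasFDerivAt_cauchyTransform hg hs z).fderiv, cauchyTransform_apply,
    ContinuousLinearMap.integral_apply (integrable_cauchyKernel_smul
      (hg.continuous_fderiv one_ne_zero) (hs.fderiv ℝ) z)]
  rfl

lemma integrable_cauchyKernel_smul_fderiv {g : ℂ → E} (hg : ContDiff ℝ 1 g)
    (hs : HasCompactSupport g) (z h : ℂ) :
    Integrable fun w => cauchyKernel w • fderiv ℝ g (z - w) h :=
  integrable_cauchyKernel_smul ((hg.continuous_fderiv one_ne_zero).clm_apply continuous_const)
    (hs.fderiv_apply ℝ h) z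

lemma del_cauchyTransform [CompleteSpace E] {g : ℂ → E} (hg : ContDiff ℝ 1 g)
    (hs : HasCompactSupport g) : del (cauchyTransform g) = cauchyTransform (del g) := by
  ext z
  have hint := integrable_cauchyKernel_smul_fderiv hg hs z
  simp only [del, fderiv_cauchyTransform_apply hg hs, cauchyTransform_apply]
  rw [← integral_smul, ← integral_sub (hint 1) ((hint Complex.I).fun_smul _), ← integral_smul]
  simp only [smul_sub, smul_comm _ (cauchyKernel _)]

lemma dbar_cauchyTransform [CompleteSpace E] {g : ℂ → E} (hg : ContDiff ℝ 1 g)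
    (hs : HasCompactSupport g) : dbar (cauchyTransform g) = g := by
  ext z
  conv_rhs => rw [← cauchyTransform_dbar hg hs]
  have hint := integrable_cauchyKernel_smul_fderiv hg hs z
  simp only [dbar, fderiv_cauchyTransform_apply hg hs, cauchyTransform_apply]
  rw [← integral_smul, ← integral_add (hint 1) ((hint Complex.I).fun_smul _), ← integral_smul]
  simp only [smul_add, smul_comm _ (cauchyKernel _)]

end CauchyPompeiu

/-! ### Semilinear equations `u = T (H (·, u))` -/

section Picard

open MeasureTheory
open scoped BoundedContinuousFunction

/-- On `s`, the map `H` and its first two derivatives are bounded by `δ`. -/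
structure C2BoundedOn {V W : Type*} [NormedAddCommGroup V] [NormedSpace ℝ V]
    [NormedAddCommGroup W] [NormedSpace ℝ W] (H : V → W) (s : Set V) (δ : ℝ) : Prop where
  norm_le : ∀ q ∈ s, ‖H q‖ ≤ δ
  norm_fderiv_le : ∀ q ∈ s, ‖fderiv ℝ H q‖ ≤ δ
  norm_fderiv_fderiv_le : ∀ q ∈ s, ‖fderiv ℝ (fderiv ℝ H) q‖ ≤ δ

/-- The nonlinearity induced by `H` on first jets: if `(y, ℓ)` is the first jet of `u` at `z`, then
`jetMap H (z, (y, ℓ))` is the first jet of `w ↦ H (w, u w)` at `z`. -/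
def jetMap (H : ℂ × E → E) (q : ℂ × (E × (ℂ →L[ℝ] E))) : E × (ℂ →L[ℝ] E) :=
  (H (q.1, q.2.1), (fderiv ℝ H (q.1, q.2.1)).comp ((ContinuousLinearMap.id ℝ ℂ).prod q.2.2))

lemma hasFDerivAt_jetMap {H : ℂ × E → E} (hH : ContDiff ℝ 1 H) {u : ℂ → E} {ℓ : ℂ →L[ℝ] E} {z : ℂ}
    (hu : HasFDerivAt u ℓ z) :
    HasFDerivAt (fun w => H (w, u w)) (jetMap H (z, (u z, ℓ))).2 z :=
  (hH.differentiable one_ne_zero (z, u z)).hasFDerivAt.comp z ((hasFDerivAt_id z).prodMk hu)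

lemma continuous_jetMap {H : ℂ × E → E} (hH : ContDiff ℝ 1 H) : Continuous (jetMap H) := by
  have hDH := hH.continuous_fderiv one_ne_zero
  have hH := hH.continuous
  exact (hH.comp (by fun_prop)).prodMk ((hDH.comp (by fun_prop)).clm_comp
    ((ContinuousLinearMap.prodₗᵢ ℝ).continuous.comp
      (continuous_const.prodMk (by fun_prop))))

lemma fderiv_eq_zero_of_lt_norm {V W : Type*} [NormedAddCommGroup V] [NormedSpace ℝ V]
    [NormedAddCommGroup W] [NormedSpace ℝ W] {H : ℂ × V → W} {r : ℝ}
    (h : ∀ q, r < ‖q.1‖ → H q = 0) (q : ℂ × V) (hq : r < ‖q.1‖) : fderiv ℝ H q = 0 := by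
  have hev : H =ᶠ[𝓝 q] 0 := by
    filter_upwards [(isOpen_lt continuous_const continuous_fst.norm).mem_nhds hq] with p hp
      using h p hp
  rw [hev.fderiv_eq, fderiv_zero, Pi.zero_apply]

lemma jetMap_eq_zero {H : ℂ × E → E} {r : ℝ} (h : ∀ q, r < ‖q.1‖ → H q = 0) (z : ℂ)
    (hz : r < ‖z‖) (s : E × (ℂ →L[ℝ] E)) : jetMap H (z, s) = 0 := by
  simp [jetMap, h (z, s.1) hz, fderiv_eq_zero_of_lt_norm h (z, s.1) hz]

lemma norm_id_prod_le {ℓ : ℂ →L[ℝ] E} (hℓ : ‖ℓ‖ ≤ 1) :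
    ‖(ContinuousLinearMap.id ℝ ℂ).prod ℓ‖ ≤ 1 := by
  refine ContinuousLinearMap.opNorm_le_bound _ zero_le_one fun z => ?_
  rw [one_mul, ContinuousLinearMap.prod_apply, Prod.norm_def]
  exact max_le le_rfl ((ℓ.le_of_opNorm_le hℓ z).trans (one_mul _).le)

lemma norm_jetMap_le {H : ℂ × E → E} {δ : ℝ}
    (hδ : C2BoundedOn H (univ ×ˢ closedBall 0 1) δ) (z : ℂ) {s : E × (ℂ →L[ℝ] E)}
    (hs : ‖s‖ ≤ 1) : ‖jetMap H (z, s)‖ ≤ δ := by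
  have hmem : (z, s.1) ∈ univ ×ˢ closedBall (0 : E) 1 :=
    ⟨mem_univ _, mem_closedBall_zero_iff.2 ((norm_fst_le s).trans hs)⟩
  refine max_le (hδ.norm_le _ hmem) ((ContinuousLinearMap.opNorm_comp_le _ _).trans ?_)
  exact (mul_le_of_le_one_right (norm_nonneg _) (norm_id_prod_le ((norm_snd_le s).trans hs))).trans
    (hδ.norm_fderiv_le _ hmem)

lemma norm_jetMap_sub_le {H : ℂ × E → E} (hH : ContDiff ℝ 2 H) {δ : ℝ}
    (hδ : C2BoundedOn H (univ ×ˢ closedBall 0 1) δ) (z : ℂ) {s t : E × (ℂ →L[ℝ] E)}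
    (hs : ‖s‖ ≤ 1) (ht : ‖t‖ ≤ 1) : ‖jetMap H (z, s) - jetMap H (z, t)‖ ≤ 2 * δ * ‖s - t‖ := by
  have hconv : Convex ℝ (univ ×ˢ closedBall (0 : E) 1 : Set (ℂ × E)) :=
    convex_univ.prod (convex_closedBall 0 1)
  have hmem : ∀ {s : E × (ℂ →L[ℝ] E)}, ‖s‖ ≤ 1 → (z, s.1) ∈ univ ×ˢ closedBall (0 : E) 1 :=
    fun hs => ⟨mem_univ _, mem_closedBall_zero_iff.2 ((norm_fst_le _).trans hs)⟩
  have hδ0 : 0 ≤ δ := (norm_nonneg _).trans (hδ.norm_le _ (hmem hs))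
  have hdist : ‖(z, s.1) - (z, t.1)‖ ≤ ‖s - t‖ := by
    simp [Prod.norm_def]
  have hvalue : ‖H (z, s.1) - H (z, t.1)‖ ≤ δ * ‖s - t‖ :=
    (hconv.norm_image_sub_le_of_norm_fderiv_le
      (fun q _ => hH.differentiable two_ne_zero q) hδ.norm_fderiv_le (hmem ht) (hmem hs)).trans
      (mul_le_mul_of_nonneg_left hdist hδ0)
  have hfderiv : ‖fderiv ℝ H (z, s.1) - fderiv ℝ H (z, t.1)‖ ≤ δ * ‖s - t‖ :=
    (hconv.norm_image_sub_le_of_norm_fderiv_le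
      (fun q _ => (hH.fderiv_right (m := 1) le_rfl).differentiable one_ne_zero q)
      hδ.norm_fderiv_fderiv_le (hmem ht) (hmem hs)).trans (mul_le_mul_of_nonneg_left hdist hδ0)
  have hsplit : (jetMap H (z, s) - jetMap H (z, t)).2 =
      (fderiv ℝ H (z, s.1) - fderiv ℝ H (z, t.1)).comp ((ContinuousLinearMap.id ℝ ℂ).prod s.2) +
        (fderiv ℝ H (z, t.1)).comp (ContinuousLinearMap.prod 0 (s.2 - t.2)) := by
    ext
    simp only [jetMap, Prod.snd_sub, sub_apply, add_apply, ContinuousLinearMap.comp_apply,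
      ContinuousLinearMap.prod_apply, ContinuousLinearMap.id_apply, zero_apply]
    rw [sub_add, ← map_sub, Prod.mk_sub_mk, sub_zero, sub_sub_cancel]
  have hprod : ‖ContinuousLinearMap.prod (0 : ℂ →L[ℝ] ℂ) (s.2 - t.2)‖ ≤ ‖s - t‖ := by
    rw [ContinuousLinearMap.opNorm_prod, Prod.norm_def, norm_zero]
    exact max_le (norm_nonneg _) (norm_snd_le (s - t))
  refine max_le (hvalue.trans (by gcongr; linarith)) ?_
  calc ‖(jetMap H (z, s) - jetMap H (z, t)).2‖
      ≤ ‖fderiv ℝ H (z, s.1) - fderiv ℝ H (z, t.1)‖ * 1 + ‖fderiv ℝ H (z, t.1)‖ * ‖s - t‖ := by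
        rw [hsplit]
        refine (norm_add_le _ _).trans (add_le_add ?_ ?_) <;>
          refine (ContinuousLinearMap.opNorm_comp_le _ _).trans ?_ <;> gcongr
        exact norm_id_prod_le ((norm_snd_le s).trans hs)
    _ ≤ δ * ‖s - t‖ + δ * ‖s - t‖ := by
        rw [mul_one]
        gcongr
        exact hδ.norm_fderiv_le _ (hmem ht)
    _ = 2 * δ * ‖s - t‖ := by ring

/-- The bounded continuous fields of first jets of functions `ℂ → E` that are holonomic, that is,
whose derivative component is the derivative of their value component. -/
def holonomicJets (E : Type*) [NormedAddCommGroup E] [NormedSpace ℂ E] :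
    Set (ℂ →ᵇ E × (ℂ →L[ℝ] E)) :=
  {s | ∀ z, HasFDerivAt (fun w => (s w).1) (s z).2 z}

lemma isClosed_holonomicJets : IsClosed (holonomicJets E) := by
  refine isSeqClosed_iff_isClosed.1 fun s t hs hst z => ?_
  have hunif := BoundedContinuousFunction.tendsto_iff_tendstoUniformly.1 hst
  exact hasFDerivAt_of_tendstoUniformly
    (uniformContinuous_snd.comp_tendstoUniformly hunif) hs
    (fun w => ((continuous_fst.tendsto _).comp (hunif.tendsto_at w))) z

lemma exists_boundedContinuousFunction_cauchyTransform {g : ℂ → E} (hg : Continuous g) {r : ℝ}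
    (hs : ∀ w, r < ‖w‖ → g w = 0) : ∃ G : ℂ →ᵇ E, ∀ z, G z = cauchyTransform g z := by
  have hsupp := hasCompactSupport_of_eq_zero_of_lt_norm hs
  obtain ⟨M, hM⟩ := hsupp.exists_bound_of_continuous hg
  exact ⟨.ofNormedAddCommGroup _ (continuous_cauchyTransform hg hsupp) _
    (norm_cauchyTransform_le hM hs), fun _ => rfl⟩

lemma fst_cauchyTransform [CompleteSpace E] [CompleteSpace F] {g : ℂ → E × F} (hg : Continuous g)
    (hs : HasCompactSupport g) (z : ℂ) :
    (cauchyTransform g z).1 = cauchyTransform (fun w => (g w).1) z :=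
  map_cauchyTransform (ContinuousLinearMap.fst ℂ E F) hg hs z

lemma snd_cauchyTransform [CompleteSpace E] [CompleteSpace F] {g : ℂ → E × F} (hg : Continuous g)
    (hs : HasCompactSupport g) (z : ℂ) :
    (cauchyTransform g z).2 = cauchyTransform (fun w => (g w).2) z :=
  map_cauchyTransform (ContinuousLinearMap.snd ℂ E F) hg hs z

lemma hasFDerivAt_cauchyTransform_jet [CompleteSpace E] {g : ℂ → E × (ℂ →L[ℝ] E)}
    (hg : Continuous g) (hs : HasCompactSupport g)
    (hd : ∀ z, HasFDerivAt (fun w => (g w).1) (g z).2 z) (z : ℂ) :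
    HasFDerivAt (fun w => (cauchyTransform g w).1) (cauchyTransform g z).2 z := by
  have hfderiv : (fun w => (g w).2) = fderiv ℝ fun w => (g w).1 :=
    funext fun w => (hd w).fderiv.symm
  have hC1 : ContDiff ℝ 1 fun w => (g w).1 :=
    contDiff_one_iff_hasFDerivAt.2 ⟨_, hg.snd, hd⟩
  simp only [fst_cauchyTransform hg hs, snd_cauchyTransform hg hs]
  rw [hfderiv]
  exact hasFDerivAt_cauchyTransform hC1 (hs.comp_left (g := Prod.fst) rfl) z

lemma continuous_jetMap_comp {H : ℂ × E → E} (hH : ContDiff ℝ 1 H)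
    (s : ℂ →ᵇ E × (ℂ →L[ℝ] E)) : Continuous fun w => jetMap H (w, s w) :=
  (continuous_jetMap hH).comp (continuous_id.prodMk s.continuous)

lemma norm_coe_le_one_of_mem_closedBall {V : Type*} [NormedAddCommGroup V] {s : ℂ →ᵇ V}
    (hs : s ∈ closedBall 0 1) (z : ℂ) : ‖s z‖ ≤ 1 :=
  (s.norm_coe_le_norm z).trans (mem_closedBall_zero_iff.1 hs)

lemma norm_cauchyTransform_jetMap_sub_le {H : ℂ × E → E} (hH : ContDiff ℝ 2 H) {r δ : ℝ}
    (hr : ∀ q, r < ‖q.1‖ → H q = 0) (hδ : C2BoundedOn H (univ ×ˢ closedBall 0 1) δ)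
    {s t : ℂ →ᵇ E × (ℂ →L[ℝ] E)} (hs : s ∈ closedBall 0 1) (ht : t ∈ closedBall 0 1) (z : ℂ) :
    ‖cauchyTransform (fun w => jetMap H (w, s w)) z -
      cauchyTransform (fun w => jetMap H (w, t w)) z‖ ≤ cauchyNorm r * (2 * δ * ‖s - t‖) := by
  have hδ0 : 0 ≤ δ := (norm_nonneg _).trans (hδ.norm_le 0 ⟨mem_univ _, by simp⟩)
  have hH1 : ContDiff ℝ 1 H := hH.of_le one_le_two
  exact norm_cauchyTransform_sub_le (continuous_jetMap_comp hH1 s) (continuous_jetMap_comp hH1 t)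
    (fun w hw => jetMap_eq_zero hr w hw _) (fun w hw => jetMap_eq_zero hr w hw _)
    (fun w => (norm_jetMap_sub_le hH hδ w (norm_coe_le_one_of_mem_closedBall hs w)
      (norm_coe_le_one_of_mem_closedBall ht w)).trans
      (mul_le_mul_of_nonneg_left ((s - t).norm_coe_le_norm w) (by positivity))) z

theorem exists_eq_cauchyTransform [CompleteSpace E] {H : ℂ × E → E} (hH : ContDiff ℝ 2 H)
    {r δ : ℝ} (hr : ∀ q, r < ‖q.1‖ → H q = 0)
    (hδ : C2BoundedOn H (univ ×ˢ closedBall 0 1) δ) (hsmall : cauchyNorm r * δ ≤ 1 / 4) :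
    ∃ u : ℂ → E, ContDiff ℝ 1 u ∧ (∀ z, u z = cauchyTransform (fun w => H (w, u w)) z) ∧
      ∀ z, ‖u z‖ ≤ cauchyNorm r * δ := by
  have hcont := continuous_jetMap_comp (hH.of_le one_le_two)
  have hzero : ∀ (s : ℂ →ᵇ E × (ℂ →L[ℝ] E)) w, r < ‖w‖ → jetMap H (w, s w) = 0 := fun s w hw =>
    jetMap_eq_zero hr w hw (s w)
  have hsupp := fun s => hasCompactSupport_of_eq_zero_of_lt_norm (hzero s)
  choose P hP using fun s => exists_boundedContinuousFunction_cauchyTransform (hcont s) (hzero s)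
  have hnorm : ∀ s ∈ closedBall 0 1, ∀ z, ‖P s z‖ ≤ cauchyNorm r * δ := fun s hs z => by
    rw [hP]
    exact norm_cauchyTransform_le (fun w => norm_jetMap_le hδ w
      (norm_coe_le_one_of_mem_closedBall hs w)) (hzero s) z
  have hmaps : MapsTo P (holonomicJets E ∩ closedBall 0 1) (holonomicJets E ∩ closedBall 0 1) := by
    refine fun s hs => ⟨fun z => ?_, mem_closedBall_zero_iff.2
      ((P s).norm_le zero_le_one |>.2 fun z => (hnorm s hs.2 z).trans (by linarith))⟩
    simp only [hP]
    exact hasFDerivAt_cauchyTransform_jet (hcont s) (hsupp s)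
      (fun z => hasFDerivAt_jetMap (hH.of_le one_le_two) (hs.1 z)) z
  have hcontr : ContractingWith 2⁻¹ (hmaps.restrict P _ _) := by
    refine ⟨by rw [← NNReal.coe_lt_coe]; norm_num, LipschitzWith.of_dist_le_mul fun s t => ?_⟩
    change dist (P s) (P t) ≤ _
    rw [dist_eq_norm, Subtype.dist_eq s t, dist_eq_norm s.1]
    refine (BoundedContinuousFunction.norm_le (by positivity)).2 fun z => ?_
    rw [BoundedContinuousFunction.sub_apply, hP, hP]
    refine (norm_cauchyTransform_jetMap_sub_le hH hr hδ s.2.2 t.2.2 z).trans ?_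
    rw [NNReal.coe_inv, NNReal.coe_ofNat]
    linarith [mul_le_mul_of_nonneg_right hsmall (norm_nonneg (s.1 - t.1))]
  obtain ⟨s, ⟨hs, hs1⟩, hfix, -⟩ := hcontr.exists_fixedPoint'
    (isClosed_holonomicJets.inter isClosed_closedBall).isComplete hmaps
    (x := 0) ⟨fun z => hasFDerivAt_const 0 z, mem_closedBall_self zero_le_one⟩ (edist_ne_top _ _)
  have hsP : ∀ z, s z = P s z := fun z => by rw [hfix.eq]
  refine ⟨fun z => (s z).1, contDiff_one_iff_hasFDerivAt.2 ⟨_, s.continuous.snd, hs⟩, fun z => ?_,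
    fun z => ?_⟩
  · exact (congrArg Prod.fst ((hsP z).trans (hP s z))).trans
      (fst_cauchyTransform (hcont s) (hsupp s) z)
  · exact (norm_fst_le (s z)).trans ((congrArg norm (hsP z)).trans_le (hnorm s hs1 z))

end Picard

/-! ### The Beltrami equation -/

section Beltrami

variable {ρ : ℂ × E → E →L[ℝ] E}

/-- The value of `∂a/∂ζ̄` along a solution `f` of the Beltrami equation `∂f/∂ζ̄ = ρ(ζ, f) ∂f/∂ζ`
with `a = ∂f/∂ζ`. Differentiating the equation in `ζ`, the conjugate linearity of `ρ` turns the
term containing `∂a` into `ρ(ζ, f) ∂a/∂ζ̄`, so that solving for `∂a/∂ζ̄` leaves an expression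
without derivatives of `a`. -/
def prolongedTerm (ρ : ℂ × E → E →L[ℝ] E) (q : ℂ × E) (a : E) : E :=
  Ring.inverse (1 - ρ q) ((2⁻¹ : ℂ) • (fderiv ℝ ρ q (1, a + ρ q a) a -
    Complex.I • fderiv ℝ ρ q (Complex.I, Complex.I • (a - ρ q a)) a))

lemma map_dbar_of_map_I_smul {L : E →L[ℝ] F} (hL : ∀ v, L (Complex.I • v) = -(Complex.I • L v))
    (g : ℂ → E) (z : ℂ) : L (dbar g z) =
      (2⁻¹ : ℂ) • (L (fderiv ℝ g z 1) - Complex.I • L (fderiv ℝ g z Complex.I)) := by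
  have htwo : (2⁻¹ : ℂ) = ((2⁻¹ : ℝ) : ℂ) := by norm_num
  rw [dbar, htwo, Complex.coe_smul, Complex.coe_smul, map_smul, map_add, hL, sub_eq_add_neg]

lemma fderiv_comp_graph_apply {f a : ℂ → E} {z : ℂ} (hρ : DifferentiableAt ℝ ρ (z, f z))
    (hf : DifferentiableAt ℝ f z) (ha : DifferentiableAt ℝ a z) (h : ℂ) :
    fderiv ℝ (fun w => ρ (w, f w) (a w)) z h =
      fderiv ℝ ρ (z, f z) (h, fderiv ℝ f z h) (a z) + ρ (z, f z) (fderiv ℝ a z h) := by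
  have hgraph : HasFDerivAt (fun w => ρ (w, f w)) _ z :=
    hρ.hasFDerivAt.comp z ((hasFDerivAt_id z).prodMk hf.hasFDerivAt)
  rw [(hgraph.clm_apply ha.hasFDerivAt).fderiv]
  simp [add_comm]

lemma del_sub_prolongedTerm {f a : ℂ → E} {z : ℂ} {e : E} (hρ : DifferentiableAt ℝ ρ (z, f z))
    (hanti : ∀ v, ρ (z, f z) (Complex.I • v) = -(Complex.I • ρ (z, f z) v))
    (hunit : IsUnit (1 - ρ (z, f z))) (hf : DifferentiableAt ℝ f z) (ha : DifferentiableAt ℝ a z)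
    (hdel : del f z = a z + e) (hdbar : dbar f z = ρ (z, f z) (a z))
    (hdbara : dbar a z = prolongedTerm ρ (z, f z) (a z)) :
    del (fun w => ρ (w, f w) (a w)) z - prolongedTerm ρ (z, f z) (a z) =
      (2⁻¹ : ℂ) • (fderiv ℝ ρ (z, f z) (0, e) (a z) -
        Complex.I • fderiv ℝ ρ (z, f z) (0, Complex.I • e) (a z)) := by
  set q := (z, f z)
  have hinverse : prolongedTerm ρ q (a z) - ρ q (prolongedTerm ρ q (a z)) =
      (2⁻¹ : ℂ) • (fderiv ℝ ρ q (1, a z + ρ q (a z)) (a z) -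
        Complex.I • fderiv ℝ ρ q (Complex.I, Complex.I • (a z - ρ q (a z))) (a z)) :=
    congrArg (fun L : E →L[ℝ] E => L _) (Ring.mul_inverse_cancel _ hunit)
  have hconj := map_dbar_of_map_I_smul hanti a z
  have hx : ((1 : ℂ), fderiv ℝ f z 1) = (1, a z + ρ q (a z)) + (0, e) := by
    rw [fderiv_apply_one, hdel, hdbar, Prod.mk_add_mk, add_zero, add_right_comm]
  have hy : (Complex.I, fderiv ℝ f z Complex.I) =
      (Complex.I, Complex.I • (a z - ρ q (a z))) + (0, Complex.I • e) := by
    rw [fderiv_apply_I, hdel, hdbar, Prod.mk_add_mk, add_zero, ← smul_add, add_sub_right_comm]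
  rw [hdbara] at hconj
  rw [del, fderiv_comp_graph_apply hρ hf ha, fderiv_comp_graph_apply hρ hf ha, hx, hy, map_add,
    map_add, add_apply, add_apply]
  linear_combination (norm := module) (-1 : ℂ) • hinverse - hconj

/-- The right-hand side of the system `∂(φ, α)/∂ζ̄ = H(ζ, (φ, α))` satisfied by a solution
`f = ζX + φ` of the Beltrami equation with `∂f/∂ζ = X + α`. -/
def discSystem (ρ : ℂ × E → E →L[ℝ] E) (X : E) (q : ℂ × (E × E)) : E × E :=
  (ρ (q.1, q.1 • X + q.2.1) (X + q.2.2), prolongedTerm ρ (q.1, q.1 • X + q.2.1) (X + q.2.2))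

lemma discSystem_eq_zero {r : ℝ} (hr : ∀ q, r < ‖q.1‖ → ρ q = 0) (X : E) (q : ℂ × (E × E))
    (hq : r < ‖q.1‖) : discSystem ρ X q = 0 := by
  rw [discSystem, hr _ hq, prolongedTerm, fderiv_eq_zero_of_lt_norm hr _ hq]
  simp

lemma isUnit_one_sub_of_norm_le_half [CompleteSpace E] {A : E →L[ℝ] E} (hA : ‖A‖ ≤ 1 / 2) :
    IsUnit (1 - A) :=
  isUnit_one_sub_of_norm_lt_one (hA.trans_lt (by norm_num))

section Smoothness

variable {Y : Type*} [NormedAddCommGroup Y] [NormedSpace ℝ Y] {ρ : Y → ℂ × E → E →L[ℝ] E}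
  {n : WithTop ℕ∞}

lemma contDiff_prolongedTerm [CompleteSpace E] {q : Y → ℂ × E} {a : Y → E}
    (hρ : ContDiff ℝ (n + 1) (Function.uncurry ρ)) (hq : ContDiff ℝ n q) (ha : ContDiff ℝ n a)
    (hunit : ∀ y, IsUnit (1 - ρ y (q y))) :
    ContDiff ℝ n fun y => prolongedTerm (ρ y) (q y) (a y) := by
  have hI : ∀ {g : Y → E}, ContDiff ℝ n g → ContDiff ℝ n fun y => Complex.I • g y :=
    fun hg => contDiff_const.smul hg
  have hρq : ContDiff ℝ n fun y => ρ y (q y) :=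
    (hρ.of_le le_self_add).comp (contDiff_id.prodMk hq)
  have hDρ : ContDiff ℝ n fun y => fderiv ℝ (ρ y) (q y) := ContDiff.fderiv hρ hq le_rfl
  have hinv : ContDiff ℝ n fun y => Ring.inverse (1 - ρ y (q y)) :=
    contDiff_iff_contDiffAt.2 fun y => by
      obtain ⟨U, hU⟩ := hunit y
      exact ContDiffAt.comp y (hU ▸ contDiffAt_ringInverse ℝ U)
        (contDiff_const.sub hρq).contDiffAt
  have hρa : ContDiff ℝ n fun y => ρ y (q y) (a y) := hρq.clm_apply ha
  refine hinv.clm_apply (contDiff_const.smul (ContDiff.sub ?_ (hI ?_)))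
  · exact (hDρ.clm_apply (contDiff_const.prodMk (ha.add hρa))).clm_apply ha
  · exact (hDρ.clm_apply (contDiff_const.prodMk (hI (ha.sub hρa)))).clm_apply ha

lemma contDiff_uncurry_discSystem [CompleteSpace E] (hρ : ContDiff ℝ (n + 1) (Function.uncurry ρ))
    (hhalf : ∀ y q, ‖ρ y q‖ ≤ 1 / 2) (X : E) :
    ContDiff ℝ n (Function.uncurry fun y => discSystem (ρ y) X) := by
  have hq : ContDiff ℝ n fun p : Y × (ℂ × (E × E)) => (p.2.1, p.2.1 • X + p.2.2.1) := by fun_prop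
  have ha : ContDiff ℝ n fun p : Y × (ℂ × (E × E)) => X + p.2.2.2 := by fun_prop
  have hρ' : ContDiff ℝ (n + 1) (Function.uncurry fun p : Y × (ℂ × (E × E)) => ρ p.1) :=
    hρ.comp (by fun_prop : ContDiff ℝ (n + 1)
      fun x : (Y × (ℂ × (E × E))) × (ℂ × E) => (x.1.1, x.2))
  exact (((hρ.of_le le_self_add).comp (contDiff_fst.prodMk hq)).clm_apply ha).prodMk
    (contDiff_prolongedTerm hρ' hq ha fun p => isUnit_one_sub_of_norm_le_half (hhalf _ _))

end Smoothness

lemma contDiff_add_one_of_del_of_dbar {g : ℂ → E} {n : ℕ} (hg : Differentiable ℝ g)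
    (hdel : ContDiff ℝ n (del g)) (hdbar : ContDiff ℝ n (dbar g)) : ContDiff ℝ (n + 1) g := by
  have hfderiv : fderiv ℝ g = fun z => Complex.reCLM.smulRight (del g z + dbar g z) +
      Complex.imCLM.smulRight (Complex.I • (del g z - dbar g z)) := by
    ext z h
    conv_lhs => rw [show h = h.re • (1 : ℂ) + h.im • Complex.I by simp, map_add, map_smul, map_smul,
      fderiv_apply_one, fderiv_apply_I]
    rfl
  rw [contDiff_succ_iff_fderiv]
  refine ⟨hg, by simp, ?_⟩
  rw [hfderiv]
  exact (contDiff_const.smulRight (hdel.add hdbar)).add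
    (contDiff_const.smulRight (contDiff_const.smul (hdel.sub hdbar)))

end Beltrami

section BeltramiDisc

lemma cauchyTransform_eq_zero_of_norm_le {g : ℂ → E} (hg : Continuous g) {r c : ℝ} (hc : 0 ≤ c)
    (hr : ∀ z, r < ‖z‖ → g z = 0) (hbound : ∀ z, ‖g z‖ ≤ c * ‖cauchyTransform g z‖)
    (hsmall : cauchyNorm r * c ≤ 1 / 2) : cauchyTransform g = 0 := by
  obtain ⟨G, hG⟩ := exists_boundedContinuousFunction_cauchyTransform hg hr
  have hgG : ∀ z, ‖g z‖ ≤ c * ‖G‖ := fun z =>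
    (hbound z).trans (mul_le_mul_of_nonneg_left (hG z ▸ G.norm_coe_le_norm z) hc)
  have hhalf : ‖G‖ ≤ 1 / 2 * ‖G‖ := (G.norm_le (by positivity)).2 fun z => by
    rw [hG]
    refine (norm_cauchyTransform_le hgG hr z).trans ?_
    rw [← mul_assoc]
    exact mul_le_mul_of_nonneg_right hsmall (norm_nonneg G)
  have hG0 : G = 0 := norm_le_zero_iff.1 (by linarith)
  ext z
  rw [← hG, hG0]
  rfl

lemma fderiv_smul_const_add {φ : ℂ → E} {z : ℂ} (hφ : DifferentiableAt ℝ φ z) (X : E) (h : ℂ) :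
    fderiv ℝ (fun w => w • X + φ w) z h = h • X + fderiv ℝ φ z h := by
  have hline : HasFDerivAt (fun w : ℂ => w • X) _ z := (hasFDerivAt_id (𝕜 := ℝ) z).smul_const X
  rw [(hline.fun_add hφ.hasFDerivAt).fderiv]
  rfl

lemma del_smul_const_add {φ : ℂ → E} {z : ℂ} (hφ : DifferentiableAt ℝ φ z) (X : E) :
    del (fun w => w • X + φ w) z = X + del φ z := by
  simp only [del, fderiv_smul_const_add hφ, smul_add, smul_smul, Complex.I_mul_I]
  module

lemma dbar_smul_const_add {φ : ℂ → E} {z : ℂ} (hφ : DifferentiableAt ℝ φ z) (X : E) :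
    dbar (fun w => w • X + φ w) z = dbar φ z := by
  simp only [dbar, fderiv_smul_const_add hφ, smul_add, smul_smul, Complex.I_mul_I]
  module

lemma dbar_const_add (X : E) (α : ℂ → E) (z : ℂ) : dbar (fun w => X + α w) z = dbar α z := by
  simp only [dbar, fderiv_const_add]

lemma norm_two_inv_smul_sub_le {L : E → F} {c : ℝ} (hL : ∀ v, ‖L v‖ ≤ c * ‖v‖) (e : E) :
    ‖(2⁻¹ : ℂ) • (L e - Complex.I • L (Complex.I • e))‖ ≤ c * ‖e‖ := by
  calc ‖(2⁻¹ : ℂ) • (L e - Complex.I • L (Complex.I • e))‖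
      = 2⁻¹ * ‖L e - Complex.I • L (Complex.I • e)‖ := by rw [norm_smul]; norm_num
    _ ≤ 2⁻¹ * (c * ‖e‖ + c * ‖e‖) := by
        gcongr
        refine (norm_sub_le _ _).trans (add_le_add (hL e) ?_)
        simpa [norm_smul] using hL (Complex.I • e)
    _ = c * ‖e‖ := by ring

variable {ρ : ℂ × E → E →L[ℝ] E}

lemma contDiff_discSystem [CompleteSpace E] {n : WithTop ℕ∞} (hρ : ContDiff ℝ (n + 1) ρ)
    (hhalf : ∀ q, ‖ρ q‖ ≤ 1 / 2) (X : E) : ContDiff ℝ n (discSystem ρ X) :=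
  (contDiff_uncurry_discSystem (Y := ℝ) (ρ := fun _ => ρ) (hρ.comp contDiff_snd)
    (fun _ => hhalf) X).comp (contDiff_const (c := (0 : ℝ)).prodMk contDiff_id)

lemma norm_fderiv_inr_apply_le (q : ℂ × E) (v a : E) :
    ‖fderiv ℝ ρ q (0, v) a‖ ≤ ‖fderiv ℝ ρ q‖ * ‖a‖ * ‖v‖ := by
  refine (ContinuousLinearMap.le_opNorm₂ _ _ _).trans (le_of_eq ?_)
  rw [Prod.norm_def, norm_zero, max_eq_right (norm_nonneg v), mul_right_comm]

lemma norm_del_discSystem_sub_le {φ α : ℂ → E} {X : E} {z : ℂ}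
    (hρ : DifferentiableAt ℝ ρ (z, z • X + φ z))
    (hanti : ∀ v, ρ (z, z • X + φ z) (Complex.I • v) = -(Complex.I • ρ (z, z • X + φ z) v))
    (hunit : IsUnit (1 - ρ (z, z • X + φ z)))
    (hφ : DifferentiableAt ℝ φ z) (hα : DifferentiableAt ℝ α z)
    (hdbarφ : dbar φ z = (discSystem ρ X (z, (φ z, α z))).1)
    (hdbarα : dbar α z = (discSystem ρ X (z, (φ z, α z))).2) :
    ‖del (fun w => (discSystem ρ X (w, (φ w, α w))).1) z - (discSystem ρ X (z, (φ z, α z))).2‖ ≤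
      ‖fderiv ℝ ρ (z, z • X + φ z)‖ * ‖X + α z‖ * ‖del φ z - α z‖ := by
  have hdefect := del_sub_prolongedTerm (f := fun w => w • X + φ w) (a := fun w => X + α w)
    (e := del φ z - α z) hρ hanti hunit ((differentiableAt_id.smul_const X).add hφ)
    (hα.const_add X) (by rw [del_smul_const_add hφ, add_add_sub_cancel])
    (by rw [dbar_smul_const_add hφ, hdbarφ, discSystem])
    (by rw [dbar_const_add, hdbarα, discSystem])
  exact (congrArg norm hdefect).trans_le
    (norm_two_inv_smul_sub_le (L := fun v => fderiv ℝ ρ (z, z • X + φ z) (0, v) (X + α z))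
      (fun v => norm_fderiv_inr_apply_le _ v _) _)

/-- The defect `e = ∂φ - α` is the Cauchy transform of an expression linear in `e` with small
coefficients, hence vanishes. -/
lemma del_eq_of_eq_cauchyTransform [CompleteSpace E] (hρ : ContDiff ℝ 2 ρ)
    (hanti : ∀ q v, ρ q (Complex.I • v) = -(Complex.I • ρ q v)) (hhalf : ∀ q, ‖ρ q‖ ≤ 1 / 2)
    {r δ : ℝ} (hr : ∀ q, r < ‖q.1‖ → ρ q = 0) {X : E}
    (hD : ∀ z, ∀ v ∈ closedBall (0 : E) 1, ‖fderiv ℝ ρ (z, z • X + v)‖ ≤ δ)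
    (hsmall : cauchyNorm r * (δ * (‖X‖ + 1)) ≤ 1 / 2)
    {φ α : ℂ → E} (hφ : ContDiff ℝ 1 φ) (hα : ContDiff ℝ 1 α)
    (hφ1 : ∀ z, ‖φ z‖ ≤ 1) (hα1 : ∀ z, ‖α z‖ ≤ 1)
    (hφT : φ = cauchyTransform fun w => (discSystem ρ X (w, (φ w, α w))).1)
    (hαT : α = cauchyTransform fun w => (discSystem ρ X (w, (φ w, α w))).2) : del φ = α := by
  have hsys : ContDiff ℝ 1 fun w => discSystem ρ X (w, (φ w, α w)) :=
    (contDiff_discSystem (hρ.of_le one_add_one_eq_two.le) hhalf X).comp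
      (contDiff_id.prodMk (hφ.prodMk hα))
  have hsupp := hasCompactSupport_of_eq_zero_of_lt_norm fun w hw =>
    discSystem_eq_zero hr X (w, (φ w, α w)) hw
  set β := fun w => (discSystem ρ X (w, (φ w, α w))).1
  set γ := fun w => (discSystem ρ X (w, (φ w, α w))).2
  have hβ : HasCompactSupport β := hsupp.comp_left (g := Prod.fst) rfl
  have hγ : HasCompactSupport γ := hsupp.comp_left (g := Prod.snd) rfl
  have hdbarφ : dbar φ = β := (congrArg dbar hφT).trans (dbar_cauchyTransform hsys.fst hβ)
  have hdbarα : dbar α = γ := (congrArg dbar hαT).trans (dbar_cauchyTransform hsys.snd hγ)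
  have hdelβ : Continuous (del β) := continuous_del hsys.fst
  have hdelβs : HasCompactSupport (del β) := hasCompactSupport_del hβ
  have hdefect : del φ - α = cauchyTransform (del β - γ) := by
    rw [cauchyTransform_sub hdelβ hdelβs hsys.snd.continuous hγ, ← del_cauchyTransform hsys.fst hβ,
      ← hφT, ← hαT]
  have hbound : ∀ z, ‖(del β - γ) z‖ ≤
      ‖fderiv ℝ ρ (z, z • X + φ z)‖ * ‖X + α z‖ * ‖cauchyTransform (del β - γ) z‖ := fun z => by
    rw [← hdefect]
    exact norm_del_discSystem_sub_le (hρ.differentiable two_ne_zero _) (hanti _)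
      (isUnit_one_sub_of_norm_le_half (hhalf _)) (hφ.differentiable one_ne_zero z)
      (hα.differentiable one_ne_zero z) (congrFun hdbarφ z) (congrFun hdbarα z)
  have hδ : 0 ≤ δ := (norm_nonneg (fderiv ℝ ρ _)).trans (hD 0 0 (by simp))
  have hzero := cauchyTransform_eq_zero_of_norm_le (hdelβ.sub hsys.snd.continuous) (by positivity)
    (fun z hz => norm_le_zero_iff.1 ((hbound z).trans_eq (by
      rw [norm_eq_zero.2 (fderiv_eq_zero_of_lt_norm hr (z, _) hz), zero_mul, zero_mul])))
    (fun z => (hbound z).trans (by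
      gcongr
      · exact hD z _ (mem_closedBall_zero_iff.2 (hφ1 z))
      · exact (norm_add_le _ _).trans (add_le_add_right (hα1 z) _))) hsmall
  exact sub_eq_zero.1 (hdefect.trans hzero)

theorem exists_beltrami_disc [CompleteSpace E] (hρ : ContDiff ℝ 3 ρ)
    (hanti : ∀ q v, ρ q (Complex.I • v) = -(Complex.I • ρ q v)) (hhalf : ∀ q, ‖ρ q‖ ≤ 1 / 2)
    {r δ : ℝ} (hr : ∀ q, r < ‖q.1‖ → ρ q = 0) {X : E}
    (hδ : C2BoundedOn (discSystem ρ X) (univ ×ˢ closedBall 0 1) δ)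
    (hsmall : cauchyNorm r * δ ≤ 1 / 4)
    (hD : ∀ z, ∀ v ∈ closedBall (0 : E) 1, ‖fderiv ℝ ρ (z, z • X + v)‖ ≤ δ)
    (hsmall' : cauchyNorm r * (δ * (‖X‖ + 1)) ≤ 1 / 2) :
    ∃ f : ℂ → E, ContDiff ℝ 2 f ∧ (∀ z, dbar f z = ρ (z, f z) (del f z)) ∧
      (∀ z, ‖f z - z • X‖ ≤ cauchyNorm r * δ) ∧
      ∀ z, ‖fderiv ℝ f z 1 - X‖ ≤ (cauchyNorm r + 1) * δ := by
  have hH : ContDiff ℝ 2 (discSystem ρ X) := contDiff_discSystem (hρ.of_le (by norm_num)) hhalf X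
  have hzero := discSystem_eq_zero hr X
  obtain ⟨u, hu, huT, hun⟩ := exists_eq_cauchyTransform hH hzero hδ hsmall
  have hsys : ContDiff ℝ 1 fun w => discSystem ρ X (w, u w) :=
    (hH.of_le one_le_two).comp (contDiff_id.prodMk hu)
  have hsupp := hasCompactSupport_of_eq_zero_of_lt_norm fun w hw => hzero (w, u w) hw
  have hu1 : ∀ z, ‖u z‖ ≤ 1 := fun z => (hun z).trans (by linarith)
  have hφT : (fun w => (u w).1) = cauchyTransform fun w => (discSystem ρ X (w, u w)).1 :=
    funext fun z => (congrArg Prod.fst (huT z)).trans (fst_cauchyTransform hsys.continuous hsupp z)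
  have hαT : (fun w => (u w).2) = cauchyTransform fun w => (discSystem ρ X (w, u w)).2 :=
    funext fun z => (congrArg Prod.snd (huT z)).trans (snd_cauchyTransform hsys.continuous hsupp z)
  have hdelφ : del (fun w => (u w).1) = fun w => (u w).2 :=
    del_eq_of_eq_cauchyTransform (hρ.of_le (by norm_num)) hanti hhalf hr hD hsmall' hu.fst hu.snd
      (fun z => (norm_fst_le _).trans (hu1 z)) (fun z => (norm_snd_le _).trans (hu1 z)) hφT hαT
  have hφ := hu.fst.differentiable one_ne_zero
  have hdel : del (fun w => w • X + (u w).1) = fun w => X + (u w).2 :=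
    funext fun z => by rw [del_smul_const_add (hφ z), hdelφ]
  have hdbar : dbar (fun w => w • X + (u w).1) = fun w => (discSystem ρ X (w, u w)).1 :=
    funext fun z => by
      rw [dbar_smul_const_add (hφ z)]
      exact congrFun ((congrArg dbar hφT).trans (dbar_cauchyTransform hsys.fst
        (hsupp.comp_left (g := Prod.fst) rfl))) z
  refine ⟨fun z => z • X + (u z).1, ?_, fun z => ?_, fun z => ?_, fun z => ?_⟩
  · exact contDiff_add_one_of_del_of_dbar ((differentiable_id.smul_const X).add hφ)
      (hdel ▸ contDiff_const.add hu.snd) (hdbar ▸ hsys.fst)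
  · rw [hdbar, hdel]
    rfl
  · rw [add_sub_cancel_left]
    exact (norm_fst_le _).trans (hun z)
  · rw [fderiv_apply_one, hdel, hdbar, add_sub_right_comm, add_sub_cancel_left, add_one_mul]
    exact norm_add_le_of_le ((norm_snd_le _).trans (hun z))
      ((norm_fst_le _).trans (hδ.norm_le _ ⟨mem_univ _, mem_closedBall_zero_iff.2 (hu1 z)⟩))

end BeltramiDisc

/-! ### Small discs -/

section SmallDiscs

lemma eventually_norm_le_of_isCompact {V W : Type*} [TopologicalSpace V] [NormedAddCommGroup W]
    {F : ℝ → V → W} (hF : Continuous (Function.uncurry F)) {K : Set V} (hK : IsCompact K)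
    (hF0 : F 0 = 0) {δ : ℝ} (hδ : 0 < δ) : ∀ᶠ t in 𝓝 0, ∀ q ∈ K, ‖F t q‖ ≤ δ := by
  refine hK.eventually_forall_of_forall_eventually fun q _ => ?_
  have hlim : Tendsto (fun x : ℝ × V => ‖F x.1 x.2‖) (𝓝 (0, q)) (𝓝 0) :=
    hF.norm.tendsto' (0, q) 0 (by simp [hF0])
  exact hlim.eventually_le_const hδ

lemma norm_le_on_univ_prod {V W : Type*} [NormedAddCommGroup W] {g : ℂ × V → W} {r δ : ℝ}
    {s : Set V} (hδ : 0 ≤ δ) (hg : ∀ q, r < ‖q.1‖ → g q = 0)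
    (hgs : ∀ q ∈ closedBall (0 : ℂ) r ×ˢ s, ‖g q‖ ≤ δ) : ∀ q ∈ univ ×ˢ s, ‖g q‖ ≤ δ := by
  intro q hq
  rcases lt_or_ge r ‖q.1‖ with h | h
  · rwa [hg q h, norm_zero]
  · exact hgs q ⟨mem_closedBall_zero_iff.2 h, hq.2⟩

section Eventually

variable {V W : Type*} [NormedAddCommGroup V] [NormedSpace ℝ V] [NormedAddCommGroup W]
  [NormedSpace ℝ W]

lemma contDiff_uncurry_fderiv {n : ℕ∞} {F : ℝ → V → W}
    (hF : ContDiff ℝ (n + 1) (Function.uncurry F)) :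
    ContDiff ℝ n (Function.uncurry fun t => fderiv ℝ (F t)) :=
  ContDiff.fderiv (f := fun x : ℝ × V => F x.1)
    (hF.comp (by fun_prop : ContDiff ℝ (n + 1) fun x : (ℝ × V) × V => (x.1.1, x.2)))
    contDiff_snd le_rfl

lemma eventually_c2BoundedOn {F : ℝ → ℂ × V → W} (hF : ContDiff ℝ 2 (Function.uncurry F))
    (hF0 : F 0 = 0) {r : ℝ} (hr : ∀ t q, r < ‖q.1‖ → F t q = 0) {s : Set V} (hs : IsCompact s)
    {δ : ℝ} (hδ : 0 < δ) : ∀ᶠ t in 𝓝 0, C2BoundedOn (F t) (univ ×ˢ s) δ := by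
  have hDF : ContDiff ℝ 1 (Function.uncurry fun t => fderiv ℝ (F t)) :=
    contDiff_uncurry_fderiv (n := 1) (hF.of_le (by norm_num))
  have hDDF : ContDiff ℝ 0 (Function.uncurry fun t => fderiv ℝ (fderiv ℝ (F t))) :=
    contDiff_uncurry_fderiv (n := 0) (hDF.of_le (by norm_num))
  have hDF0 : fderiv ℝ (F 0) = 0 := by rw [hF0, fderiv_zero]
  have hDDF0 : fderiv ℝ (fderiv ℝ (F 0)) = 0 := by rw [hDF0, fderiv_zero]
  have hK : IsCompact (closedBall (0 : ℂ) r ×ˢ s) := (isCompact_closedBall 0 r).prod hs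
  filter_upwards [eventually_norm_le_of_isCompact hF.continuous hK hF0 hδ,
    eventually_norm_le_of_isCompact hDF.continuous hK hDF0 hδ,
    eventually_norm_le_of_isCompact hDDF.continuous hK hDDF0 hδ] with t h0 h1 h2
  have hDr := fderiv_eq_zero_of_lt_norm (hr t)
  exact ⟨norm_le_on_univ_prod hδ.le (hr t) h0, norm_le_on_univ_prod hδ.le hDr h1,
    norm_le_on_univ_prod hδ.le (fderiv_eq_zero_of_lt_norm hDr) h2⟩

end Eventually

lemma norm_fderiv_smul_add_le {W : Type*} [NormedAddCommGroup W] [NormedSpace ℝ W]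
    {H : ℂ × E → W} {r δ : ℝ} (hδ : 0 ≤ δ) (hr : ∀ q, r < ‖q.1‖ → H q = 0) {X : E} {b : ℝ}
    (hH : C2BoundedOn H (univ ×ˢ closedBall 0 (r * ‖X‖ + b)) δ) {z : ℂ} {v : E}
    (hv : v ∈ closedBall 0 b) : ‖fderiv ℝ H (z, z • X + v)‖ ≤ δ := by
  rcases lt_or_ge r ‖z‖ with hz | hz
  · exact (norm_eq_zero.2 (fderiv_eq_zero_of_lt_norm hr _ hz)).trans_le hδ
  · refine hH.norm_fderiv_le _ ⟨mem_univ _, mem_closedBall_zero_iff.2 ?_⟩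
    refine norm_add_le_of_le ?_ (mem_closedBall_zero_iff.1 hv)
    rw [norm_smul]
    gcongr

/-- A fixed smooth bump function on `ℂ` which is `1` on the unit disc and is supported in the disc
of radius `2`. -/
def discBump : ContDiffBump (0 : ℂ) := ⟨1, 2, one_pos, one_lt_two⟩

/-- The coefficient `R` rescaled by `t`, and cut off in the disc variable so that its Cauchy
transform makes sense. -/
def cutoffRescale (R : E → E →L[ℝ] E) (t : ℝ) (q : ℂ × E) : E →L[ℝ] E :=
  discBump q.1 • R (t • q.2)

variable {R : E → E →L[ℝ] E}

lemma contDiff_cutoffRescale {n : ℕ∞} (hR : ContDiff ℝ n R) :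
    ContDiff ℝ n (Function.uncurry (cutoffRescale R)) :=
  (discBump.contDiff.comp (by fun_prop)).smul (hR.comp (by fun_prop))

lemma norm_cutoffRescale_le {c : ℝ} (hR : ∀ y, ‖R y‖ ≤ c) (t : ℝ) (q : ℂ × E) :
    ‖cutoffRescale R t q‖ ≤ c := by
  rw [cutoffRescale, norm_smul, Real.norm_of_nonneg discBump.nonneg]
  exact (mul_le_of_le_one_left (norm_nonneg _) discBump.le_one).trans (hR _)

lemma cutoffRescale_eq_zero (R : E → E →L[ℝ] E) (t : ℝ) (q : ℂ × E) (hq : 2 < ‖q.1‖) :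
    cutoffRescale R t q = 0 := by
  have hbump : discBump q.1 = 0 := discBump.zero_of_le_dist ((dist_zero_right q.1).symm ▸ hq.le)
  rw [cutoffRescale, hbump, zero_smul]

lemma cutoffRescale_zero (hR0 : R 0 = 0) : cutoffRescale R 0 = 0 := by
  funext q
  rw [cutoffRescale, zero_smul, hR0, smul_zero, Pi.zero_apply]

lemma cutoffRescale_of_mem_ball {z : ℂ} (hz : z ∈ ball (0 : ℂ) 1) (t : ℝ) (v : E) :
    cutoffRescale R t (z, v) = R (t • v) := by
  rw [cutoffRescale, discBump.one_of_mem_closedBall (ball_subset_closedBall hz), one_smul]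

lemma cutoffRescale_apply_I_smul
    (hanti : ∀ y v, R y (Complex.I • v) = -(Complex.I • R y v)) (t : ℝ) (q : ℂ × E) (v : E) :
    cutoffRescale R t q (Complex.I • v) = -(Complex.I • cutoffRescale R t q v) := by
  rw [cutoffRescale, smul_apply, smul_apply, hanti, smul_neg, smul_comm]

theorem eventually_exists_rescaled_beltrami_disc [ProperSpace E] (hR : ContDiff ℝ 3 R)
    (hanti : ∀ y v, R y (Complex.I • v) = -(Complex.I • R y v)) (hhalf : ∀ y, ‖R y‖ ≤ 1 / 2)
    (hR0 : R 0 = 0) (X : E) {ε : ℝ} (hε : 0 < ε) :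
    ∀ᶠ t in 𝓝 (0 : ℝ), ∃ f : ℂ → E, ContDiff ℝ 2 f ∧ (∀ z ∈ ball (0 : ℂ) 1, ‖f z‖ ≤ ‖X‖ + 1) ∧
      ‖fderiv ℝ f 0 1 - X‖ ≤ ε ∧ ∀ z ∈ ball (0 : ℂ) 1, dbar f z = R (t • f z) (del f z) := by
  have small : ∀ c b : ℝ, 0 < b → ∀ᶠ δ in 𝓝[>] (0 : ℝ), c * δ ≤ b := fun c b hb =>
    ((Continuous.tendsto' (by fun_prop) 0 0 (mul_zero c)).mono_left
      nhdsWithin_le_nhds).eventually_le_const hb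
  obtain ⟨δ, ⟨hδ, hδ', hδε⟩, hδ0 : 0 < δ⟩ := ((small (cauchyNorm 2) (1 / 4) (by norm_num)).and
    ((small (cauchyNorm 2 * (‖X‖ + 1)) (1 / 2) (by norm_num)).and
      (small (cauchyNorm 2 + 1) ε hε))).and self_mem_nhdsWithin |>.exists
  have hρ := contDiff_cutoffRescale hR
  have hρ0 := cutoffRescale_zero hR0
  have hsys0 : discSystem (cutoffRescale R 0) X = 0 := funext fun q =>
    discSystem_eq_zero (r := -1) (fun q _ => congrFun hρ0 q) X q
      (neg_one_lt_zero.trans_le (norm_nonneg _))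
  filter_upwards [eventually_c2BoundedOn (contDiff_uncurry_discSystem (n := 2)
      (hρ.of_le (by norm_num)) (norm_cutoffRescale_le hhalf) X) hsys0
      (fun t => discSystem_eq_zero (cutoffRescale_eq_zero R t) X) (isCompact_closedBall 0 1) hδ0,
    eventually_c2BoundedOn (hρ.of_le (by norm_num)) hρ0 (cutoffRescale_eq_zero R)
      (isCompact_closedBall 0 (2 * ‖X‖ + 1)) hδ0] with t hsys hD
  obtain ⟨f, hf, heq, hfX, hDf⟩ := exists_beltrami_disc (ρ := cutoffRescale R t)
    (hρ.comp (contDiff_prodMk_right t)) (cutoffRescale_apply_I_smul hanti t)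
    (norm_cutoffRescale_le hhalf t) (cutoffRescale_eq_zero R t) hsys hδ
    (fun _ _ => norm_fderiv_smul_add_le hδ0.le (cutoffRescale_eq_zero R t) hD) (by linarith)
  refine ⟨f, hf, fun z hz => ?_, (hDf 0).trans hδε, fun z hz => ?_⟩
  · have hz1 : ‖z • X‖ ≤ ‖X‖ := by
      rw [norm_smul]
      exact mul_le_of_le_one_left (norm_nonneg X) (mem_ball_zero_iff.1 hz).le
    linarith [norm_le_norm_add_norm_sub' (f z) (z • X), hfX z]
  · rw [heq, cutoffRescale_of_mem_ball hz]

end SmallDiscs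

/-! ### The Beltrami coefficient of an almost complex structure -/

section BeltramiCoeff

/-- The Beltrami coefficient of the complex structure `j` relative to the complex structure `k`: a
map is `j`-holomorphic if its `k`-antilinear derivative is the coefficient times its `k`-linear
derivative. Junk value `0` if `j + k` is not invertible. -/
def beltramiCoeff {A : Type*} [Ring A] (j k : A) : A := Ring.inverse (j + k) * (k - j)

lemma beltramiCoeff_self {A : Type*} [Ring A] (k : A) : beltramiCoeff k k = 0 := by
  rw [beltramiCoeff, sub_self, mul_zero]

lemma mul_one_add_beltramiCoeff {A : Type*} [Ring A] {j k : A} (hu : IsUnit (j + k)) :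
    j * (1 + beltramiCoeff j k) = k * (1 - beltramiCoeff j k) := by
  have hcoeff : j * beltramiCoeff j k + k * beltramiCoeff j k = k - j := by
    rw [← add_mul, beltramiCoeff, Ring.mul_inverse_cancel_left _ _ hu]
  rw [mul_one_add, mul_one_sub, eq_sub_iff_add_eq, add_assoc, hcoeff, add_sub_cancel]

lemma mul_beltramiCoeff {A : Type*} [Ring A] {j k : A} (hj : j * j = -1) (hk : k * k = -1)
    (hu : IsUnit (j + k)) : k * beltramiCoeff j k = -(beltramiCoeff j k * k) := by
  have hinv : k * Ring.inverse (j + k) = Ring.inverse (j + k) * j :=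
    calc k * Ring.inverse (j + k)
        = Ring.inverse (j + k) * ((j + k) * k) * Ring.inverse (j + k) := by
          rw [Ring.inverse_mul_cancel_left _ _ hu]
      _ = Ring.inverse (j + k) * (j * (j + k)) * Ring.inverse (j + k) := by
          rw [add_mul j, mul_add j, hj, hk, add_comm (j * k)]
      _ = Ring.inverse (j + k) * j := by
          rw [← mul_assoc, Ring.mul_inverse_cancel_right _ _ hu]
  rw [beltramiCoeff, ← mul_assoc, hinv, mul_assoc, mul_assoc, ← mul_neg, mul_sub, sub_mul, hj, hk,
    neg_sub, sub_neg_eq_add]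

lemma isUnit_add_self_of_mul_self_eq_neg_one {A : Type*} [Ring A] [Algebra ℝ A] {k : A}
    (hk : k * k = -1) : IsUnit (k + k) := by
  have hku : IsUnit k := ⟨⟨k, -k, by rw [mul_neg, hk, neg_neg], by rw [neg_mul, hk, neg_neg]⟩, rfl⟩
  rw [← two_mul, ← map_ofNat (algebraMap ℝ A) 2]
  exact ((isUnit_iff_ne_zero.2 two_ne_zero).map _).mul hku

lemma contDiffAt_beltramiCoeff {V A : Type*} [NormedAddCommGroup V] [NormedSpace ℝ V]
    [NormedRing A] [NormedAlgebra ℝ A] [HasSummableGeomSeries A] {n : ℕ∞} {j : V → A} {k : A}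
    {y : V} (hj : ContDiffAt ℝ n j y) (hu : IsUnit (j y + k)) :
    ContDiffAt ℝ n (fun y => beltramiCoeff (j y) k) y := by
  have hinverse : ContDiffAt ℝ n Ring.inverse (j y + k) := contDiffAt_ringInverse ℝ hu.unit
  exact (hinverse.comp y (hj.add contDiffAt_const)).mul (contDiffAt_const.sub hj)

lemma exists_contDiffBump_contDiff_smul {V W : Type*} [NormedAddCommGroup V] [NormedSpace ℝ V]
    [FiniteDimensional ℝ V] [NormedAddCommGroup W] [NormedSpace ℝ W] {n : ℕ∞} {Q : V → W} {p : V}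
    {P : V → Prop} (hQ : ∀ᶠ y in 𝓝 p, ContDiffAt ℝ n Q y) (hP : ∀ᶠ y in 𝓝 p, P y) :
    ∃ η : ContDiffBump p, ContDiff ℝ n (fun y => η y • Q y) ∧ ∀ y, η y ≠ 0 → P y := by
  obtain ⟨s, hs, hball⟩ := nhds_basis_closedBall.eventually_iff.1 (hQ.and hP)
  let η : ContDiffBump p := ⟨s / 2, s, half_pos hs, half_lt_self hs⟩
  refine ⟨η, contDiff_iff_contDiffAt.2 fun y => ?_, fun y hy =>
    (hball (η.tsupport_eq ▸ subset_tsupport η hy)).2⟩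
  by_cases hy : y ∈ tsupport η
  · exact η.contDiffAt.smul (hball (η.tsupport_eq ▸ hy)).1
  · refine (contDiffAt_const (c := 0)).congr_of_eventuallyEq ?_
    filter_upwards [notMem_tsupport_iff_eventuallyEq.1 hy] with w hw
    rw [hw, Pi.zero_apply, zero_smul]

theorem exists_beltrami_coefficient [FiniteDimensional ℝ E] {n : ℕ∞} {J : E → E →L[ℝ] E}
    (hJ : ∀ᶠ y in 𝓝 0, ContDiffAt ℝ n J y) (hJ2 : ∀ᶠ y in 𝓝 0, J y * J y = -1)
    (hJ0 : J 0 = Jst E) :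
    ∃ R : E → E →L[ℝ] E, ContDiff ℝ n R ∧ (∀ y v, R y (Complex.I • v) = -(Complex.I • R y v)) ∧
      (∀ y, ‖R y‖ ≤ 1 / 2) ∧ R 0 = 0 ∧
      ∀ᶠ y in 𝓝 0, ∀ b, J y (b + R y b) = Complex.I • (b - R y b) := by
  have : CompleteSpace E := FiniteDimensional.complete ℝ E
  have hst : Jst E * Jst E = -1 := hJ0 ▸ hJ2.self_of_nhds
  have hu0 : IsUnit (J 0 + Jst E) := hJ0.symm ▸ isUnit_add_self_of_mul_self_eq_neg_one hst
  have hu : ∀ᶠ y in 𝓝 0, IsUnit (J y + Jst E) :=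
    (hJ.self_of_nhds.continuousAt.add continuousAt_const).eventually (Units.isOpen.mem_nhds hu0)
  let Q := fun y => beltramiCoeff (J y) (Jst E)
  have hQ0 : Q 0 = 0 := (congrArg (beltramiCoeff · (Jst E)) hJ0).trans (beltramiCoeff_self _)
  have hQ : ∀ᶠ y in 𝓝 0, ContDiffAt ℝ n Q y :=
    (hJ.and hu).mono fun y h => contDiffAt_beltramiCoeff h.1 h.2
  have hQhalf : ∀ᶠ y in 𝓝 0, ‖Q y‖ ≤ 1 / 2 :=
    hQ.self_of_nhds.continuousAt.norm.eventually_le_const (by simp [hQ0])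
  obtain ⟨η, hη, hηQ⟩ := exists_contDiffBump_contDiff_smul hQ ((hJ2.and hu).and hQhalf)
  refine ⟨fun y => η y • Q y, hη, fun y v => ?_, fun y => ?_, by simp [hQ0], ?_⟩
  · rcases eq_or_ne (η y) 0 with h | h
    · simp [h]
    · obtain ⟨⟨hy2, hyu⟩, -⟩ := hηQ y h
      have hanti : Complex.I • Q y v = -Q y (Complex.I • v) :=
        DFunLike.congr_fun (mul_beltramiCoeff hy2 hst hyu) v
      rw [smul_apply, smul_apply, smul_comm, hanti, smul_neg, neg_neg]
  · rcases eq_or_ne (η y) 0 with h | h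
    · simp [h]
    · rw [norm_smul, Real.norm_of_nonneg η.nonneg]
      exact (mul_le_of_le_one_left (norm_nonneg _) η.le_one).trans (hηQ y h).2
  · filter_upwards [η.eventuallyEq_one, hu] with y hηy hyu b
    rw [hηy, Pi.one_apply, one_smul]
    exact DFunLike.congr_fun (mul_one_add_beltramiCoeff hyu) b

end BeltramiCoeff

/-! ### Jets of holomorphic discs -/

section DiscJets

/-- The set of pairs `(p, v)` such that, up to positive scaling of `v`, some `C²` `J`-holomorphic
disc in `Ω` has centre `p` and derivative `v` in the real direction. -/
def discJets (J : E → E →L[ℝ] E) (Ω : Set E) : Set (E × E) :=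
  {q | ∃ f : ℂ → E, ContDiff ℝ 2 f ∧ IsJDisc J Ω f ∧ f 0 = q.1 ∧
    ∃ t : ℝ, 0 < t ∧ fderiv ℝ f 0 1 = t • q.2}

lemma comp_Jst_eq_comp_iff {j : E →L[ℝ] E} {L : ℂ →L[ℝ] E} (hj : ∀ v, j (j v) = -v) :
    L.comp (Jst ℂ) = j.comp L ↔ L Complex.I = j (L 1) := by
  refine ⟨fun h => by simpa [Jst] using DFunLike.congr_fun h 1,
    fun h => ContinuousLinearMap.ext fun v => ?_⟩
  have hL : ∀ w : ℂ, L w = w.re • L 1 + w.im • L Complex.I := fun w => by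
    rw [← map_smul, ← map_smul, ← map_add]
    exact congrArg L (by simp [Complex.re_add_im])
  change L (Complex.I * v) = j (L v)
  rw [hL (Complex.I * v), hL v, map_add, map_smul, map_smul, h, hj]
  simp [add_comm]

theorem zero_mem_closure_discJets [FiniteDimensional ℝ E] {Ω : Set E} {J : E → E →L[ℝ] E}
    (hΩ : Ω ∈ 𝓝 0) (hJ : ∀ᶠ y in 𝓝 0, ContDiffAt ℝ 3 J y) (hJ2 : ∀ y ∈ Ω, ∀ v, J y (J y v) = -v)
    (hJ0 : J 0 = Jst E) (X : E) : (0, X) ∈ closure (discJets J Ω) := by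
  have : ProperSpace E := FiniteDimensional.proper_real E
  have hsq : ∀ᶠ y in 𝓝 0, J y * J y = -1 := by
    filter_upwards [hΩ] with y hy using ContinuousLinearMap.ext (hJ2 y hy)
  obtain ⟨R, hR, hanti, hhalf, hR0, hRJ⟩ := exists_beltrami_coefficient (n := 3) hJ hsq hJ0
  refine Metric.mem_closure_iff.2 fun ε hε => ?_
  obtain ⟨s, hs, hball⟩ := nhds_basis_ball.eventually_iff.1 (hRJ.and hΩ)
  have hlim : Tendsto (fun t : ℝ => t * (‖X‖ + 1)) (𝓝 0) (𝓝 0) :=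
    Continuous.tendsto' (by fun_prop) 0 0 (zero_mul _)
  have hsmall : ∀ᶠ t in 𝓝[>] (0 : ℝ), t * (‖X‖ + 1) < min s ε :=
    (hlim.mono_left nhdsWithin_le_nhds).eventually_lt_const (lt_min hs hε)
  obtain ⟨t, ⟨⟨f, hf, hfX, hDf, heq⟩, ht⟩, ht0 : 0 < t⟩ :=
    (((eventually_exists_rescaled_beltrami_disc hR hanti hhalf hR0 X
      (half_pos hε)).filter_mono nhdsWithin_le_nhds).and hsmall).and self_mem_nhdsWithin |>.exists
  have hnorm : ∀ z ∈ ball (0 : ℂ) 1, ‖t • f z‖ < min s ε := fun z hz => by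
    rw [norm_smul, Real.norm_of_nonneg ht0.le]
    exact (mul_le_mul_of_nonneg_left (hfX z hz) ht0.le).trans_lt ht
  have hmem := fun z hz => hball (mem_ball_zero_iff.2 ((hnorm z hz).trans_le (min_le_left s ε)))
  have hd : ∀ z, HasFDerivAt (fun z => t • f z) (t • fderiv ℝ f z) z := fun z =>
    (hf.differentiable two_ne_zero z).hasFDerivAt.const_smul t
  refine ⟨(t • f 0, fderiv ℝ f 0 1), ⟨fun z => t • f z, hf.const_smul t,
    ⟨fun z hz => (hmem z hz).2, fun z hz => ⟨(hd z).differentiableAt, ?_⟩⟩, rfl, t, ht0,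
    DFunLike.congr_fun (hd 0).fderiv 1⟩, ?_⟩
  · rw [comp_Jst_eq_comp_iff (hJ2 _ (hmem z hz).2), (hd z).fderiv, smul_apply, smul_apply,
      map_smul, fderiv_apply_one, fderiv_apply_I, heq z hz, (hmem z hz).1]
  · rw [dist_comm, Prod.dist_eq, dist_zero_right, dist_eq_norm]
    exact max_lt ((hnorm 0 (mem_ball_self one_pos)).trans_le (min_le_right s ε))
      (hDf.trans_lt (half_lt_self hε))

lemma exists_linearEquiv_apply_eq_I_smul {V W : Type*} [AddCommGroup V] [Module ℝ V]
    [FiniteDimensional ℝ V] [AddCommGroup W] [Module ℂ W] [FiniteDimensional ℂ W]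
    (hdim : Module.finrank ℝ V = Module.finrank ℝ W) {j : V →ₗ[ℝ] V} (hj : j * j = -1) :
    ∃ A : V ≃ₗ[ℝ] W, ∀ v, A (j v) = Complex.I • A v := by
  let ψ : ℂ →ₐ[ℝ] Module.End ℝ V := Complex.lift ⟨j, hj⟩
  let : Module ℂ V := Module.compHom V ψ.toRingHom
  have : IsScalarTower ℝ ℂ V := ⟨fun r z v => DFunLike.congr_fun (map_smul ψ r z) v⟩
  have : FiniteDimensional ℂ V := Module.Finite.of_restrictScalars_finite ℝ ℂ V
  have hdimC : Module.finrank ℂ V = Module.finrank ℂ W := by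
    have hV := Module.finrank_mul_finrank ℝ ℂ V
    have hW := Module.finrank_mul_finrank ℝ ℂ W
    rw [Complex.finrank_real_complex] at hV hW
    omega
  let A := LinearEquiv.ofFinrankEq V W hdimC
  have hI : ∀ v, j v = Complex.I • v := fun v =>
    DFunLike.congr_fun (Complex.liftAux_apply_I j hj).symm v
  exact ⟨A.restrictScalars ℝ, fun v => (congrArg A (hI v)).trans (map_smul A Complex.I v)⟩

/-- The almost complex structure `J` in the affine coordinates `y ↦ A (y - p)`. -/
def affineConj (J : E → E →L[ℝ] E) (p : E) (A : E ≃L[ℝ] F) (y : F) : F →L[ℝ] F :=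
  A.arrowCongr A (J (p + A.symm y))

lemma map_mem_discJets {J : E → E →L[ℝ] E} {Ω : Set E} {p : E} {A : E ≃L[ℝ] F} {q : F × F}
    (hq : q ∈ discJets (affineConj J p A) ((fun y => p + A.symm y) ⁻¹' Ω)) :
    (p + A.symm q.1, A.symm q.2) ∈ discJets J Ω := by
  obtain ⟨f, hf, ⟨hfΩ, hfJ⟩, hf0, t, ht, hft⟩ := hq
  have hd : ∀ z, DifferentiableAt ℝ f z → HasFDerivAt (fun z => p + A.symm (f z))
      ((A.symm : F →L[ℝ] E).comp (fderiv ℝ f z)) z := fun z hz =>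
    (A.symm.hasFDerivAt.comp z hz.hasFDerivAt).const_add p
  refine ⟨fun z => p + A.symm (f z), contDiff_const.add (A.symm.contDiff.comp hf),
    ⟨hfΩ, fun z hz => ⟨(hd z (hfJ z hz).1).differentiableAt, ?_⟩⟩,
    congrArg (fun y => p + A.symm y) hf0, t, ht, ?_⟩
  · rw [(hd z (hfJ z hz).1).fderiv, ContinuousLinearMap.comp_assoc, (hfJ z hz).2]
    ext v
    simp [affineConj]
  · rw [(hd 0 (hf.differentiable two_ne_zero 0)).fderiv, ContinuousLinearMap.comp_apply, hft,
      map_smul]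
    rfl

theorem prod_univ_subset_closure_discJets [FiniteDimensional ℂ E] {Ω : Set E} (hΩ : IsOpen Ω)
    {J : E → E →L[ℝ] E} (hJ : ContDiffOn ℝ 3 J Ω) (hJ2 : ∀ x ∈ Ω, ∀ v, J x (J x v) = -v) :
    Ω ×ˢ univ ⊆ closure (discJets J Ω) := by
  rintro ⟨p, X⟩ ⟨hp : p ∈ Ω, -⟩
  have : FiniteDimensional ℝ E := FiniteDimensional.complexToReal E
  obtain ⟨A, hA⟩ := exists_linearEquiv_apply_eq_I_smul (W := E) rfl
    (j := (J p : E →ₗ[ℝ] E)) (LinearMap.ext (hJ2 p hp))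
  let A' := A.toContinuousLinearEquiv
  have hcoord : ContDiff ℝ 3 fun y => p + A'.symm y := contDiff_const.add A'.symm.contDiff
  have hp0 : p + A'.symm 0 = p := by rw [map_zero, add_zero]
  have hΩ' : (fun y => p + A'.symm y) ⁻¹' Ω ∈ 𝓝 0 :=
    (hΩ.preimage hcoord.continuous).mem_nhds (by rwa [mem_preimage, hp0])
  have hJ' : ∀ᶠ y in 𝓝 0, ContDiffAt ℝ 3 (affineConj J p A') y := by
    filter_upwards [hΩ'] with y hy
    exact (A'.arrowCongr A').contDiff.contDiffAt.comp y
      ((hJ.contDiffAt (hΩ.mem_nhds hy)).comp y hcoord.contDiffAt)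
  have hJ0 : affineConj J p A' 0 = Jst E := by
    ext v
    simpa [affineConj, Jst, A'] using hA (A.symm v)
  have hzero := zero_mem_closure_discJets hΩ' hJ'
    (fun y hy v => by simp [affineConj, hJ2 _ hy]) hJ0 (A' X)
  have hcont : Continuous fun q : E × E => (p + A'.symm q.1, A'.symm q.2) := by fun_prop
  simpa using map_mem_closure hcont hzero fun q => map_mem_discJets

end DiscJets

/-! ### The Levi form along holomorphic discs -/

section LeviForm

lemma leviForm_smul (J : E → E →L[ℝ] E) (u : E → ℝ) (x X : E) (t : ℝ) :
    leviForm J u x (t • X) = t ^ 2 * leviForm J u x X := by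
  simp only [leviForm, map_smul, smul_apply, smul_eq_mul]
  ring

variable {Ω : Set E} {J : E → E →L[ℝ] E} {u : E → ℝ}

lemma contDiffOn_fderiv_comp (hΩ : IsOpen Ω) (hJ : ContDiffOn ℝ 1 J Ω)
    (hu : ContDiffOn ℝ 2 u Ω) : ContDiffOn ℝ 1 (fun y => (fderiv ℝ u y).comp (J y)) Ω :=
  (hu.fderiv_of_isOpen hΩ one_add_one_eq_two.le).clm_comp hJ

lemma continuousAt_leviForm (hΩ : IsOpen Ω) (hJ : ContDiffOn ℝ 1 J Ω) (hu : ContDiffOn ℝ 2 u Ω)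
    {p : E} (hp : p ∈ Ω) (X : E) :
    ContinuousAt (fun q : E × E => leviForm J u q.1 q.2) (p, X) := by
  have hω : ContinuousAt (fun q : E × E =>
      fderiv ℝ (fun y => (fderiv ℝ u y).comp (J y)) q.1) (p, X) :=
    (((contDiffOn_fderiv_comp hΩ hJ hu).continuousOn_fderiv_of_isOpen hΩ le_rfl).continuousAt
      (hΩ.mem_nhds hp)).comp_of_eq continuousAt_fst rfl
  have hJX : ContinuousAt (fun q : E × E => J q.1 q.2) (p, X) :=
    ((hJ.continuousOn.continuousAt (hΩ.mem_nhds hp)).comp_of_eq continuousAt_fst rfl).clm_apply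
      continuousAt_snd
  exact (((hω.clm_apply continuousAt_snd).clm_apply hJX).sub
    ((hω.clm_apply hJX).clm_apply continuousAt_snd)).neg

lemma fderiv_comp_apply_fderiv_apply {G : Type*} [NormedAddCommGroup G] [NormedSpace ℝ G]
    {ω : E → E →L[ℝ] G} {f : ℂ → E} {ζ : ℂ} (hω : DifferentiableAt ℝ ω (f ζ))
    (hf : ContDiffAt ℝ 2 f ζ) (h k : ℂ) :
    fderiv ℝ (fun w => ω (f w) (fderiv ℝ f w h)) ζ k =
      fderiv ℝ ω (f ζ) (fderiv ℝ f ζ k) (fderiv ℝ f ζ h) +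
        ω (f ζ) (fderiv ℝ (fderiv ℝ f) ζ k h) := by
  have hωf : HasFDerivAt (fun w => ω (f w)) _ ζ :=
    hω.hasFDerivAt.comp ζ (hf.differentiableAt two_ne_zero).hasFDerivAt
  have hDf : HasFDerivAt (fderiv ℝ f) (fderiv ℝ (fderiv ℝ f) ζ) ζ :=
    ((hf.fderiv_right one_add_one_eq_two.le).differentiableAt one_ne_zero).hasFDerivAt
  rw [(hωf.clm_apply (hDf.clm_apply (hasFDerivAt_const h ζ))).fderiv]
  simp [add_comm]

theorem lapR_comp_eq_leviForm (hΩ : IsOpen Ω) (hJ : ContDiffOn ℝ 1 J Ω)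
    (hJ2 : ∀ x ∈ Ω, ∀ v, J x (J x v) = -v) (hu : ContDiffOn ℝ 2 u Ω) {f : ℂ → E} {D : Set ℂ}
    (hD : IsOpen D) (hf : ContDiffOn ℝ 2 f D) (hfΩ : MapsTo f D Ω)
    (hfJ : ∀ z ∈ D, fderiv ℝ f z Complex.I = J (f z) (fderiv ℝ f z 1)) {ζ : ℂ} (hζ : ζ ∈ D) :
    lapR (fun w => u (f w)) ζ = leviForm J u (f ζ) (fderiv ℝ f ζ 1) := by
  set ω : E → E →L[ℝ] ℝ := fun y => (fderiv ℝ u y).comp (J y) with hω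
  have hfζ : ContDiffAt ℝ 2 f ζ := hf.contDiffAt (hD.mem_nhds hζ)
  have hωd : DifferentiableAt ℝ ω (f ζ) :=
    ((contDiffOn_fderiv_comp hΩ hJ hu).contDiffAt (hΩ.mem_nhds (hfΩ hζ))).differentiableAt
      one_ne_zero
  have hchain : ∀ w ∈ D, ∀ h, fderiv ℝ (fun w => u (f w)) w h =
      fderiv ℝ u (f w) (fderiv ℝ f w h) := fun w hw h =>
    DFunLike.congr_fun (fderiv_fun_comp w
      ((hu.contDiffAt (hΩ.mem_nhds (hfΩ hw))).differentiableAt two_ne_zero)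
      ((hf.contDiffAt (hD.mem_nhds hw)).differentiableAt two_ne_zero)) h
  have hx : (fun w => fderiv ℝ (fun w => u (f w)) w 1) =ᶠ[𝓝 ζ]
      fun w => -ω (f w) (fderiv ℝ f w Complex.I) := by
    filter_upwards [hD.mem_nhds hζ] with w hw
    simp [hω, hchain w hw, hfJ w hw, hJ2 _ (hfΩ hw)]
  have hy : (fun w => fderiv ℝ (fun w => u (f w)) w Complex.I) =ᶠ[𝓝 ζ]
      fun w => ω (f w) (fderiv ℝ f w 1) := by
    filter_upwards [hD.mem_nhds hζ] with w hw
    simp [hω, hchain w hw, hfJ w hw]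
  have hsymm : fderiv ℝ (fderiv ℝ f) ζ 1 Complex.I = fderiv ℝ (fderiv ℝ f) ζ Complex.I 1 :=
    (hfζ.isSymmSndFDerivAt (by simp)).eq 1 Complex.I
  simp only [lapR, leviForm]
  rw [hx.fderiv_eq, hy.fderiv_eq, fderiv_fun_neg, neg_apply,
    fderiv_comp_apply_fderiv_apply hωd hfζ, fderiv_comp_apply_fderiv_apply hωd hfζ, hsymm,
    hfJ ζ hζ]
  ring

end LeviForm

theorem statement4_general [FiniteDimensional ℂ E] {Ω : Set E} (hΩ : IsOpen Ω)
    {J : E → E →L[ℝ] E} (hJ : ContDiffOn ℝ 3 J Ω) (hJ2 : ∀ x ∈ Ω, ∀ v, J x (J x v) = -v)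
    {u : E → ℝ} (hu : ContDiffOn ℝ 2 u Ω) :
    (∀ x ∈ Ω, ∀ X : E, 0 ≤ leviForm J u x X) ↔
    (∀ f : ℂ → E, ContDiffOn ℝ 2 f (ball (0 : ℂ) 1) → MapsTo f (ball (0 : ℂ) 1) Ω →
      (∀ ζ ∈ ball (0 : ℂ) 1,
        (fderiv ℝ f ζ).comp (Jst ℂ) = (J (f ζ)).comp (fderiv ℝ f ζ)) →
      ∀ ζ ∈ ball (0 : ℂ) 1, 0 ≤ lapR (fun w => u (f w)) ζ) := by
  have hJ1 : ContDiffOn ℝ 1 J Ω := hJ.of_le (by norm_num)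
  have hlap : ∀ f : ℂ → E, ContDiffOn ℝ 2 f (ball 0 1) → MapsTo f (ball 0 1) Ω →
      (∀ ζ ∈ ball (0 : ℂ) 1, (fderiv ℝ f ζ).comp (Jst ℂ) = (J (f ζ)).comp (fderiv ℝ f ζ)) →
      ∀ ζ ∈ ball 0 1, lapR (fun w => u (f w)) ζ = leviForm J u (f ζ) (fderiv ℝ f ζ 1) :=
    fun f hf hfΩ hfJ ζ => lapR_comp_eq_leviForm hΩ hJ1 hJ2 hu isOpen_ball hf hfΩ fun z hz =>
      (comp_Jst_eq_comp_iff (hJ2 _ (hfΩ hz))).1 (hfJ z hz)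
  refine ⟨fun h f hf hfΩ hfJ ζ hζ => ?_, fun h x hx X => ?_⟩
  · exact hlap f hf hfΩ hfJ ζ hζ ▸ h _ (hfΩ hζ) _
  · by_contra! hneg
    have hjet : (x, X) ∈ closure (discJets J Ω) :=
      prod_univ_subset_closure_discJets hΩ hJ hJ2 ⟨hx, mem_univ X⟩
    obtain ⟨q, ⟨f, hf, ⟨hfΩ, hfJ⟩, hf0, t, ht, hft⟩, hq⟩ := ((mem_closure_iff_frequently.1
      hjet).and_eventually ((continuousAt_leviForm hΩ hJ1 hu hx X).eventually_lt_const hneg)).exists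
    have hnonneg := h f hf.contDiffOn hfΩ (fun z hz => (hfJ z hz).2) 0 (mem_ball_self one_pos)
    rw [hlap f hf.contDiffOn hfΩ (fun z hz => (hfJ z hz).2) 0 (mem_ball_self one_pos), hf0, hft,
      leviForm_smul] at hnonneg
    exact hnonneg.not_gt (mul_neg_of_pos_of_neg (pow_pos ht 2) hq)

/-- **Characterization of `J`-plurisubharmonic functions.** A `C²` real function `u` has
nonnegative Levi form `L^J(u)` on `Ω` if and only if `u ∘ f` is subharmonic (has
nonnegative Laplacian) for every `C²` `J`-holomorphic disc `f : Δ → Ω`. -/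
theorem statement4 {n : ℕ}
    (Ω : Set (EuclideanSpace ℂ (Fin n))) (hΩ : IsOpen Ω)
    (J : EuclideanSpace ℂ (Fin n) →
      EuclideanSpace ℂ (Fin n) →L[ℝ] EuclideanSpace ℂ (Fin n))
    (hJ : IsACS Ω J)
    (u : EuclideanSpace ℂ (Fin n) → ℝ) (hu : ContDiffOn ℝ 2 u Ω) :
    (∀ x ∈ Ω, ∀ X : EuclideanSpace ℂ (Fin n), 0 ≤ leviForm J u x X) ↔
    (∀ f : ℂ → EuclideanSpace ℂ (Fin n),
      ContDiffOn ℝ 2 f (ball (0 : ℂ) 1) → MapsTo f (ball (0 : ℂ) 1) Ω →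
      (∀ ζ ∈ ball (0 : ℂ) 1,
        (fderiv ℝ f ζ).comp (Jst ℂ) = (J (f ζ)).comp (fderiv ℝ f ζ)) →
      ∀ ζ ∈ ball (0 : ℂ) 1, 0 ≤ lapR (fun w => u (f w)) ζ) :=
  statement4_general hΩ (hJ.smooth.of_le (WithTop.coe_le_coe.2 le_top))
    (fun x hx => DFunLike.congr_fun (hJ.sq x hx)) hu

end
end
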